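/- arXiv:2212.13343 — 2 statements merged into one kernel-verified Lean document; each statement's English description precedes it below -/
import Mathlib

section
/- (Beale–Kato–Majda type inequality in two dimensions.) For every p ∈ (2,∞) there exists a constant C = C(p) > 0 such that for every twice continuously differentiable vector field u = (u¹,u²) : ℝ² → ℝ² with ∇u ∈ L²(ℝ²) ∩ L^p(ℝ²) and ∇²u ∈ L^p(ℝ²), one has ‖∇u‖_{L^∞(ℝ²)} ≤ C(‖div u‖_{L^∞(ℝ²)} + ‖curl u‖_{L^∞(ℝ²)}) · log(e + ‖∇²u‖_{L^p(ℝ²)}) + C‖∇u‖_{L²(ℝ²)} + C. -/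
open MeasureTheory Real Set Metric

noncomputable section

abbrev E2 := EuclideanSpace ℝ (Fin 2)

/-- The i-th standard basis vector of ℝ². -/
def e2 (i : Fin 2) : E2 := EuclideanSpace.single i (1 : ℝ)

/-- Divergence of a vector field on ℝ²: div u = ∂₁u¹ + ∂₂u². -/
def div2 (u : E2 → E2) (x : E2) : ℝ := ∑ i, fderiv ℝ u x (e2 i) i

/-- Curl (vorticity) of a vector field on ℝ²: curl u = ∂₂u¹ − ∂₁u². -/
def curl2 (u : E2 → E2) (x : E2) : ℝ :=
  fderiv ℝ u x (e2 1) 0 - fderiv ℝ u x (e2 0) 1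

/-!
The gradients `annularField a b` of `(4π)⁻¹ log ((a + ‖y‖²) / (b + ‖y‖²))` connect averages of `Du`
around a point at the scales `√a` and `√b`: their divergence is the difference of two approximate
Dirac masses. Integrating by parts once, Hölder's inequality and `D²u ∈ Lᵖ` with `p > 2` bound the
variation of the average over all scales below `√b` by a positive power `b ^ θ` of `b`, as in
Morrey's inequality. Integrating by parts twice expresses the variation between the scales `√b` and
`1` through `div u` and `curl u` alone, against the Hessian of a potential, and the `L¹` norm of
this Hessian is of order `log (1 / b)`. At scale `1` Hölder's inequality bounds the average by a
Lebesgue norm of `Du`. The choice `b = (e + ‖D²u‖_p) ^ (-1 / θ)` balances the first two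
contributions.
-/

open scoped InnerProductSpace Topology

section Kernels

variable {V : Type*} [NormedAddCommGroup V] {a b : ℝ}

/-- The radial profile `(a + ‖y‖²)⁻¹ - (b + ‖y‖²)⁻¹`, a smooth version of `‖y‖⁻²` restricted to the
annulus `√a ≤ ‖y‖ ≤ √b`. -/
def annularWeight (a b : ℝ) (y : V) : ℝ := (a + ‖y‖ ^ 2)⁻¹ - (b + ‖y‖ ^ 2)⁻¹

/-- The Laplacian of the regularised planar Newtonian potential `(4π)⁻¹ log (a + ‖y‖²)`: an
approximation, at scale `√a`, of the Dirac mass at the origin of the plane. -/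
def regDelta (a : ℝ) (y : V) : ℝ := a / (π * (a + ‖y‖ ^ 2) ^ 2)

lemma continuous_regDelta (ha : 0 < a) : Continuous (regDelta a : V → ℝ) :=
  continuous_const.div (by fun_prop) fun y => by positivity

lemma regDelta_nonneg (ha : 0 ≤ a) (y : V) : 0 ≤ regDelta a y := by
  unfold regDelta; positivity

lemma annularWeight_eq_mul (ha : 0 < a) (hb : 0 < b) (y : V) :
    annularWeight a b y = (b - a) * (a + ‖y‖ ^ 2)⁻¹ * (b + ‖y‖ ^ 2)⁻¹ := by
  rw [annularWeight]; field_simp; ring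

lemma annularWeight_nonneg (ha : 0 < a) (hab : a ≤ b) (y : V) : 0 ≤ annularWeight a b y :=
  sub_nonneg.2 (by gcongr)

variable [InnerProductSpace ℝ V]

/-- The gradient of `(4π)⁻¹ log ((a + ‖y‖²) / (b + ‖y‖²))`, the difference of two regularised planar
Newtonian potentials. -/
def annularField (a b : ℝ) (y : V) : V := ((2 * π)⁻¹ * annularWeight a b y) • y

lemma contDiff_inv_add_norm_sq (ha : 0 < a) {n : WithTop ℕ∞} :
    ContDiff ℝ n fun y : V => (a + ‖y‖ ^ 2)⁻¹ :=
  (contDiff_const.add (contDiff_norm_sq ℝ)).inv fun y => by positivity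

lemma contDiff_annularField (ha : 0 < a) (hb : 0 < b) {n : WithTop ℕ∞} :
    ContDiff ℝ n (annularField a b : V → V) :=
  (contDiff_const.mul ((contDiff_inv_add_norm_sq ha).sub (contDiff_inv_add_norm_sq hb))).smul
    contDiff_id

lemma norm_annularField (ha : 0 < a) (hab : a ≤ b) (y : V) :
    ‖annularField a b y‖ = (2 * π)⁻¹ * annularWeight a b y * ‖y‖ := by
  have := annularWeight_nonneg ha hab y
  rw [annularField, norm_smul, Real.norm_of_nonneg (by positivity)]

lemma hasFDerivAt_inv_add_norm_sq (ha : 0 < a) (y : V) :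
    HasFDerivAt (fun y : V => (a + ‖y‖ ^ 2)⁻¹)
      (-((a + ‖y‖ ^ 2) ^ 2)⁻¹ • (2 : ℝ) • innerSL ℝ y) y := by
  have hsq : HasFDerivAt (fun y : V => a + ‖y‖ ^ 2) ((2 : ℝ) • innerSL ℝ y) y := by
    simpa [two_smul] using (hasStrictFDerivAt_norm_sq y).hasFDerivAt.const_add a
  exact (hasDerivAt_inv (by positivity)).comp_hasFDerivAt y hsq

lemma fderiv_annularField_apply (ha : 0 < a) (hb : 0 < b) (y v : V) :
    fderiv ℝ (annularField a b) y v = (2 * π)⁻¹ • (annularWeight a b y • v -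
      (2 * (((a + ‖y‖ ^ 2) ^ 2)⁻¹ - ((b + ‖y‖ ^ 2) ^ 2)⁻¹) * ⟪y, v⟫_ℝ) • y) := by
  have hweight : HasFDerivAt (annularWeight a b : V → ℝ) _ y :=
    (hasFDerivAt_inv_add_norm_sq ha y).sub (hasFDerivAt_inv_add_norm_sq hb y)
  have hfield : HasFDerivAt (annularField a b : V → V) _ y :=
    (hweight.const_mul (2 * π)⁻¹).smul (hasFDerivAt_id y)
  rw [hfield.fderiv]
  simp only [add_apply, smul_apply, ContinuousLinearMap.smulRight_apply, sub_apply,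
    innerSL_apply_apply, ContinuousLinearMap.coe_id', id_eq, smul_eq_mul]
  module

lemma inner_fderiv_annularField_left (ha : 0 < a) (hb : 0 < b) (y v w : V) :
    ⟪fderiv ℝ (annularField a b) y v, w⟫_ℝ = ⟪v, fderiv ℝ (annularField a b) y w⟫_ℝ := by
  simp only [fderiv_annularField_apply ha hb, real_inner_smul_left, real_inner_smul_right,
    inner_sub_left, inner_sub_right, real_inner_comm y v]
  ring

lemma norm_fderiv_annularField_le (ha : 0 < a) (hab : a ≤ b) (y : V) :
    ‖fderiv ℝ (annularField a b) y‖ ≤ 5 / (2 * π) * annularWeight a b y := by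
  have hb := ha.trans_le hab
  have hW := annularWeight_nonneg ha hab y
  have hbound {c : ℝ} (hc : 0 < c) : ‖y‖ ^ 2 * (c + ‖y‖ ^ 2)⁻¹ ≤ 1 := by
    rw [← div_eq_mul_inv, div_le_one (by positivity)]
    linarith
  have hfactor : ((a + ‖y‖ ^ 2) ^ 2)⁻¹ - ((b + ‖y‖ ^ 2) ^ 2)⁻¹
      = annularWeight a b y * ((a + ‖y‖ ^ 2)⁻¹ + (b + ‖y‖ ^ 2)⁻¹) := by
    simp only [annularWeight, ← inv_pow]; ring
  refine ContinuousLinearMap.opNorm_le_bound _ (by positivity) fun v => ?_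
  have hradial : ‖(2 * (((a + ‖y‖ ^ 2) ^ 2)⁻¹ - ((b + ‖y‖ ^ 2) ^ 2)⁻¹) * ⟪y, v⟫_ℝ) • y‖
      ≤ 4 * annularWeight a b y * ‖v‖ := by
    rw [hfactor, norm_smul, norm_mul, Real.norm_of_nonneg (by positivity)]
    calc 2 * (annularWeight a b y * ((a + ‖y‖ ^ 2)⁻¹ + (b + ‖y‖ ^ 2)⁻¹)) * ‖⟪y, v⟫_ℝ‖ * ‖y‖
        ≤ 2 * (annularWeight a b y * ((a + ‖y‖ ^ 2)⁻¹ + (b + ‖y‖ ^ 2)⁻¹)) * (‖y‖ * ‖v‖) * ‖y‖ := by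
          gcongr; exact norm_inner_le_norm y v
      _ = 2 * annularWeight a b y * ‖v‖ *
            (‖y‖ ^ 2 * (a + ‖y‖ ^ 2)⁻¹ + ‖y‖ ^ 2 * (b + ‖y‖ ^ 2)⁻¹) := by ring
      _ ≤ 2 * annularWeight a b y * ‖v‖ * (1 + 1) := by
          gcongr
          exacts [hbound ha, hbound hb]
      _ = 4 * annularWeight a b y * ‖v‖ := by ring
  rw [fderiv_annularField_apply ha hb, norm_smul, Real.norm_of_nonneg (by positivity)]
  calc (2 * π)⁻¹ * ‖annularWeight a b y • v - _‖
      ≤ (2 * π)⁻¹ * (annularWeight a b y * ‖v‖ + 4 * annularWeight a b y * ‖v‖) := by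
        gcongr
        refine (norm_sub_le _ _).trans (add_le_add ?_ hradial)
        rw [norm_smul, Real.norm_of_nonneg hW]
    _ = 5 / (2 * π) * annularWeight a b y * ‖v‖ := by ring

end Kernels

lemma div2_annularField {a b : ℝ} (ha : 0 < a) (hb : 0 < b) (y : E2) :
    div2 (annularField a b) y = regDelta a y - regDelta b y := by
  have hnorm : ‖y‖ ^ 2 = y 0 ^ 2 + y 1 ^ 2 := by simp [EuclideanSpace.norm_sq_eq]
  have hA : a + ‖y‖ ^ 2 ≠ 0 := by positivity
  have hB : b + ‖y‖ ^ 2 ≠ 0 := by positivity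
  have htrace : div2 (annularField a b) y = (2 * π)⁻¹ * (2 * annularWeight a b y -
      2 * (((a + ‖y‖ ^ 2) ^ 2)⁻¹ - ((b + ‖y‖ ^ 2) ^ 2)⁻¹) * ‖y‖ ^ 2) := by
    simp only [div2, Fin.sum_univ_two, fderiv_annularField_apply ha hb, e2, PiLp.smul_apply,
      PiLp.sub_apply, EuclideanSpace.inner_single_right, smul_eq_mul, hnorm]
    simp only [mul_inv_rev, PiLp.single_eq_same, mul_one, ringHom_apply, one_mul]
    ring
  rw [htrace, annularWeight, regDelta, regDelta]
  field_simp
  ring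

section DecayOfKernels

variable {V : Type*} [NormedAddCommGroup V] [MeasurableSpace V] [BorelSpace V] {μ : Measure V}
  {a b q : ℝ}

lemma memLp_inv_add_norm_sq [NormedSpace ℝ V] [FiniteDimensional ℝ V] [μ.IsAddHaarMeasure]
    (hb : 0 < b) (hq : Module.finrank ℝ V < 2 * q) :
    MemLp (fun y : V => (b + ‖y‖ ^ 2)⁻¹) (ENNReal.ofReal q) μ := by
  have hq0 : 0 < q := by linarith [(Module.finrank ℝ V).cast_nonneg (α := ℝ)]
  have hone : MemLp (fun y : V => (1 + ‖y‖ ^ 2)⁻¹) (ENNReal.ofReal q) μ := by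
    rw [← integrable_norm_rpow_iff (by fun_prop) (by simpa using hq0) ENNReal.ofReal_ne_top,
      ENNReal.toReal_ofReal hq0.le]
    refine (integrable_rpow_neg_one_add_norm_sq hq).congr (.of_forall fun y => ?_)
    dsimp only
    rw [Real.norm_of_nonneg (by positivity), Real.inv_rpow (by positivity),
      ← Real.rpow_neg (by positivity)]
    ring_nf
  refine hone.of_le_mul (c := (min b 1)⁻¹) (by fun_prop) (.of_forall fun y => ?_)
  have : 0 < min b 1 := lt_min hb one_pos
  rw [Real.norm_of_nonneg (by positivity), Real.norm_of_nonneg (by positivity), ← mul_inv]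
  gcongr
  nlinarith [min_le_left b 1, min_le_right b 1, sq_nonneg ‖y‖]

lemma memLp_regDelta {p : ENNReal} (ha : 0 < a)
    (hdecay : MemLp (fun y : V => (a + ‖y‖ ^ 2)⁻¹) p μ) : MemLp (regDelta a : V → ℝ) p μ := by
  refine hdecay.of_le_mul (c := π⁻¹) (continuous_regDelta ha).aestronglyMeasurable
    (.of_forall fun y => ?_)
  rw [Real.norm_of_nonneg (regDelta_nonneg ha.le y), Real.norm_of_nonneg (by positivity)]
  calc regDelta a y = π⁻¹ * ((a / (a + ‖y‖ ^ 2)) * (a + ‖y‖ ^ 2)⁻¹) := by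
        rw [regDelta]; field_simp
    _ ≤ π⁻¹ * (1 * (a + ‖y‖ ^ 2)⁻¹) := by
        gcongr
        rw [div_le_one (by positivity)]
        linarith [sq_nonneg ‖y‖]
    _ = π⁻¹ * (a + ‖y‖ ^ 2)⁻¹ := by rw [one_mul]

variable [InnerProductSpace ℝ V] [FiniteDimensional ℝ V] [μ.IsAddHaarMeasure]

lemma memLp_annularField (ha : 0 < a) (hab : a ≤ b) (hq : Module.finrank ℝ V < 2 * q) :
    MemLp (annularField a b : V → V) (ENNReal.ofReal q) μ := by
  have hb := ha.trans_le hab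
  refine (memLp_inv_add_norm_sq hb hq).of_le_mul (c := (2 * π)⁻¹ * ((b - a) * (1 + a⁻¹)))
    (contDiff_annularField ha hb (n := 0)).continuous.aestronglyMeasurable (.of_forall fun y => ?_)
  have hgrowth : ‖y‖ * (a + ‖y‖ ^ 2)⁻¹ ≤ 1 + a⁻¹ := by
    rw [← div_eq_mul_inv, div_le_iff₀ (by positivity)]
    have : (1 + a⁻¹) * (a + ‖y‖ ^ 2) = a + 1 + ‖y‖ ^ 2 + a⁻¹ * ‖y‖ ^ 2 := by field_simp; ring
    have : 0 ≤ a⁻¹ * ‖y‖ ^ 2 := by positivity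
    nlinarith [sq_nonneg (‖y‖ - 1)]
  have : 0 ≤ b - a := sub_nonneg.2 hab
  rw [norm_annularField ha hab, Real.norm_of_nonneg (by positivity)]
  calc (2 * π)⁻¹ * annularWeight a b y * ‖y‖
      = (2 * π)⁻¹ * ((b - a) * (‖y‖ * (a + ‖y‖ ^ 2)⁻¹)) * (b + ‖y‖ ^ 2)⁻¹ := by
        rw [annularWeight_eq_mul ha hb]; ring
    _ ≤ (2 * π)⁻¹ * ((b - a) * (1 + a⁻¹)) * (b + ‖y‖ ^ 2)⁻¹ := by gcongr

lemma memLp_fderiv_annularField (ha : 0 < a) (hab : a ≤ b) (hq : Module.finrank ℝ V < 2 * q) :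
    MemLp (fderiv ℝ (annularField a b : V → V)) (ENNReal.ofReal q) μ := by
  have hb := ha.trans_le hab
  have hweight : MemLp (annularWeight a b : V → ℝ) (ENNReal.ofReal q) μ :=
    (memLp_inv_add_norm_sq ha hq).sub (memLp_inv_add_norm_sq hb hq)
  refine hweight.of_le_mul (c := 5 / (2 * π))
    ((contDiff_annularField ha hb).continuous_fderiv one_ne_zero).aestronglyMeasurable
    (.of_forall fun y => ?_)
  rw [Real.norm_of_nonneg (annularWeight_nonneg ha hab y)]
  exact norm_fderiv_annularField_le ha hab y

end DecayOfKernels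

section PlaneIntegrals

variable {a b q : ℝ}

lemma integral_fun_norm_plane (f : ℝ → ℝ) :
    ∫ y : E2, f ‖y‖ = 2 * π * ∫ t in Ioi (0 : ℝ), t * f t := by
  rw [integral_fun_norm_addHaar volume f]
  simp [Measure.real, EuclideanSpace.volume_ball_fin_two, pi_nonneg, mul_assoc]

lemma integrable_fun_norm_plane {f : ℝ → ℝ} :
    Integrable (fun y : E2 => f ‖y‖) ↔ IntegrableOn (fun t => t * f t) (Ioi 0) := by
  simpa using integrable_fun_norm_addHaar (E := E2) volume (f := f)

lemma tendsto_inv_const_add_sq_atTop (c : ℝ) :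
    Filter.Tendsto (fun t : ℝ => (c + t ^ 2)⁻¹) Filter.atTop (𝓝 0) :=
  (Filter.tendsto_atTop_add_const_left _ c
    (Filter.tendsto_pow_atTop two_ne_zero)).inv_tendsto_atTop

lemma integral_regDelta (ha : 0 < a) : ∫ y : E2, regDelta a y = 1 := by
  have hderiv (t : ℝ) :
      HasDerivAt (fun t => -a / (2 * π) * (a + t ^ 2)⁻¹) (t * (a / (π * (a + t ^ 2) ^ 2))) t := by
    have hpos : a + t ^ 2 ≠ 0 := by positivity
    refine ((((hasDerivAt_pow 2 t).const_add a).inv hpos).const_mul _).congr_deriv ?_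
    field_simp
    simp
  have hlim : Filter.Tendsto (fun t : ℝ => -a / (2 * π) * (a + t ^ 2)⁻¹) Filter.atTop (𝓝 0) := by
    simpa using (tendsto_inv_const_add_sq_atTop a).const_mul (-a / (2 * π))
  refine (integral_fun_norm_plane fun t => a / (π * (a + t ^ 2) ^ 2)).trans ?_
  rw [integral_Ioi_of_hasDerivAt_of_nonneg' (fun t _ => hderiv t)
    (fun t (ht : 0 < t) => by positivity) hlim]
  field_simp
  simp

lemma hasDerivAt_log_div_add_sq (ha : 0 < a) (hb : 0 < b) (t : ℝ) :
    HasDerivAt (fun t => log ((a + t ^ 2) / (b + t ^ 2)) / 2)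
      (t * ((a + t ^ 2)⁻¹ - (b + t ^ 2)⁻¹)) t := by
  have hsq (c : ℝ) : HasDerivAt (fun t : ℝ => c + t ^ 2) (2 * t) t := by
    simpa using (hasDerivAt_pow 2 t).const_add c
  have hA : a + t ^ 2 ≠ 0 := by positivity
  have hB : b + t ^ 2 ≠ 0 := by positivity
  refine ((((hsq a).fun_div (hsq b) hB).log (div_ne_zero hA hB)).div_const 2).congr_deriv ?_
  field_simp

lemma tendsto_log_div_add_sq_atTop (a : ℝ) (hb : 0 < b) :
    Filter.Tendsto (fun t : ℝ => log ((a + t ^ 2) / (b + t ^ 2)) / 2) Filter.atTop (𝓝 0) := by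
  have hratio : Filter.Tendsto (fun t : ℝ => (a + t ^ 2) / (b + t ^ 2)) Filter.atTop (𝓝 1) := by
    have heq (t : ℝ) : 1 + (a - b) * (b + t ^ 2)⁻¹ = (a + t ^ 2) / (b + t ^ 2) := by
      field_simp; ring
    simpa [heq] using ((tendsto_inv_const_add_sq_atTop b).const_mul (a - b)).const_add 1
  simpa using (hratio.log one_ne_zero).div_const 2

lemma mul_inv_add_sq_sub_inv_nonneg (ha : 0 < a) (hab : a ≤ b) {t : ℝ} (ht : 0 ≤ t) :
    0 ≤ t * ((a + t ^ 2)⁻¹ - (b + t ^ 2)⁻¹) :=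
  mul_nonneg ht (sub_nonneg.2 (by gcongr))

lemma integrable_annularWeight (ha : 0 < a) (hab : a ≤ b) :
    Integrable (annularWeight a b : E2 → ℝ) :=
  integrable_fun_norm_plane.2 <| integrableOn_Ioi_deriv_of_nonneg'
    (fun t _ => hasDerivAt_log_div_add_sq ha (ha.trans_le hab) t)
    (fun _ ht => mul_inv_add_sq_sub_inv_nonneg ha hab (le_of_lt ht))
    (tendsto_log_div_add_sq_atTop a (ha.trans_le hab))

lemma integral_annularWeight (ha : 0 < a) (hab : a ≤ b) :
    ∫ y : E2, annularWeight a b y = π * log (b / a) := by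
  have hb := ha.trans_le hab
  refine (integral_fun_norm_plane fun t => (a + t ^ 2)⁻¹ - (b + t ^ 2)⁻¹).trans ?_
  rw [integral_Ioi_of_hasDerivAt_of_nonneg' (fun t _ => hasDerivAt_log_div_add_sq ha hb t)
    (fun _ ht => mul_inv_add_sq_sub_inv_nonneg ha hab (le_of_lt ht))
    (tendsto_log_div_add_sq_atTop a hb), ← inv_div a b, log_inv]
  simp only [ne_eq, OfNat.ofNat_ne_zero, not_false_eq_true, zero_pow, add_zero, zero_sub, mul_neg,
    neg_inj]
  ring

lemma integrable_fderiv_annularField (ha : 0 < a) (hab : a ≤ b) :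
    Integrable (fderiv ℝ (annularField a b : E2 → E2)) :=
  ((integrable_annularWeight ha hab).const_mul (5 / (2 * π))).mono'
    ((contDiff_annularField ha (ha.trans_le hab)).continuous_fderiv
      one_ne_zero).aestronglyMeasurable
    (.of_forall (norm_fderiv_annularField_le ha hab))

lemma integral_norm_fderiv_annularField_le (ha : 0 < a) (hab : a ≤ b) :
    ∫ y : E2, ‖fderiv ℝ (annularField a b) y‖ ≤ 5 / 2 * log (b / a) :=
  calc ∫ y : E2, ‖fderiv ℝ (annularField a b) y‖
      ≤ ∫ y : E2, 5 / (2 * π) * annularWeight a b y :=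
        integral_mono (integrable_fderiv_annularField ha hab).norm
          ((integrable_annularWeight ha hab).const_mul _) (norm_fderiv_annularField_le ha hab)
    _ = 5 / 2 * log (b / a) := by
        rw [integral_const_mul, integral_annularWeight ha hab]
        field_simp

/-- The kernel `‖z‖⁻¹ (1 + ‖z‖²)⁻¹`, which after rescaling dominates `annularField a b` uniformly in
`a`. -/
def morreyKernel (z : E2) : ℝ := ‖z‖⁻¹ * (1 + ‖z‖ ^ 2)⁻¹

/-- The constant `(2π)⁻¹ ‖morreyKernel‖_q` of the Morrey-type estimate, `q` being the exponent
conjugate to that of the gradient. -/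
def morreyConst (q : ℝ) : ℝ := (2 * π)⁻¹ * (∫ z, morreyKernel z ^ q) ^ (1 / q)

lemma morreyKernel_nonneg (z : E2) : 0 ≤ morreyKernel z := by
  unfold morreyKernel; positivity

lemma morreyConst_nonneg (q : ℝ) : 0 ≤ morreyConst q :=
  mul_nonneg (by positivity) <| rpow_nonneg
    (integral_nonneg fun z => rpow_nonneg (morreyKernel_nonneg z) q) _

lemma norm_annularField_le (ha : 0 < a) (hab : a ≤ b) (y : E2) :
    ‖annularField a b y‖ ≤ (2 * π * √b)⁻¹ * morreyKernel ((√b)⁻¹ • y) := by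
  have hb := ha.trans_le hab
  rcases eq_or_ne y 0 with rfl | hy
  · simp [annularField, morreyKernel]
  have hy := norm_pos_iff.2 hy
  have hrescale : morreyKernel ((√b)⁻¹ • y) = √b * (b * ‖y‖⁻¹ * (b + ‖y‖ ^ 2)⁻¹) := by
    rw [morreyKernel, norm_smul, Real.norm_of_nonneg (by positivity), mul_pow, inv_pow,
      sq_sqrt hb.le]
    field_simp
  have hnear : (b - a) * (a + ‖y‖ ^ 2)⁻¹ * ‖y‖ ≤ b * ‖y‖⁻¹ := by
    rw [← div_eq_mul_inv, ← div_eq_mul_inv, div_mul_eq_mul_div, div_le_div_iff₀ (by positivity) hy]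
    nlinarith [mul_pos ha hb, mul_pos ha (pow_pos hy 2)]
  rw [norm_annularField ha hab, hrescale, annularWeight_eq_mul ha hb]
  calc (2 * π)⁻¹ * ((b - a) * (a + ‖y‖ ^ 2)⁻¹ * (b + ‖y‖ ^ 2)⁻¹) * ‖y‖
      = (2 * π)⁻¹ * ((b - a) * (a + ‖y‖ ^ 2)⁻¹ * ‖y‖ * (b + ‖y‖ ^ 2)⁻¹) := by ring
    _ ≤ (2 * π)⁻¹ * (b * ‖y‖⁻¹ * (b + ‖y‖ ^ 2)⁻¹) := by gcongr
    _ = (2 * π * √b)⁻¹ * (√b * (b * ‖y‖⁻¹ * (b + ‖y‖ ^ 2)⁻¹)) := by field_simp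

lemma isBigO_inv_one_add_sq_rpow_atTop (hq : 0 ≤ q) :
    (fun t : ℝ => (1 + t ^ 2)⁻¹ ^ q) =O[Filter.atTop] (· ^ (-(2 * q))) := by
  refine .of_bound 1 ?_
  filter_upwards [Filter.eventually_gt_atTop 0] with t ht
  rw [one_mul, Real.norm_of_nonneg (by positivity), Real.norm_of_nonneg (by positivity),
    Real.rpow_neg ht.le, Real.rpow_mul ht.le, Real.rpow_two, ← Real.inv_rpow (by positivity)]
  gcongr
  linarith

lemma integrable_morreyKernel_rpow (hq : 1 < q) (hq2 : q < 2) :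
    Integrable fun z => morreyKernel z ^ q := by
  have hcont : Continuous fun t : ℝ => (1 + t ^ 2)⁻¹ ^ q :=
    ((continuous_const.add (continuous_pow 2)).inv₀ fun t =>
      (by positivity : (1 : ℝ) + t ^ 2 ≠ 0)).rpow_const fun _ => .inr (by linarith)
  have hzero : (fun t : ℝ => (1 + t ^ 2)⁻¹ ^ q) =O[𝓝[>] 0] (· ^ (-(0 : ℝ))) := by
    simpa using (hcont.tendsto 0).isBigO_one ℝ |>.mono nhdsWithin_le_nhds
  have hmellin := mellin_convergent_of_isBigO_scalar (s := 2 - q)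
    (hcont.locallyIntegrable.locallyIntegrableOn _)
    (isBigO_inv_one_add_sq_rpow_atTop (by linarith)) (by linarith) hzero (by linarith)
  refine integrable_fun_norm_plane (f := fun t => (t⁻¹ * (1 + t ^ 2)⁻¹) ^ q) |>.2 <|
    hmellin.congr_fun (fun t (ht : 0 < t) => ?_) measurableSet_Ioi
  dsimp only
  rw [Real.mul_rpow (by positivity) (by positivity), Real.inv_rpow ht.le, ← Real.rpow_neg ht.le,
    ← mul_assoc, show 2 - q - 1 = 1 + -q by ring, Real.rpow_add ht, Real.rpow_one]

lemma integral_norm_annularField_rpow_le (ha : 0 < a) (hab : a ≤ b) (hq : 1 < q) (hq2 : q < 2) :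
    (∫ y : E2, ‖annularField a b y‖ ^ q) ^ (1 / q) ≤ morreyConst q * b ^ (1 / q - 1 / 2) := by
  have hb := ha.trans_le hab
  have hq0 : 0 < q := by linarith
  have hscale : ∫ y : E2, morreyKernel ((√b)⁻¹ • y) ^ q = b * ∫ z, morreyKernel z ^ q := by
    rw [Measure.integral_comp_smul volume fun z => morreyKernel z ^ q]
    simp [hb.le]
  have hint := (integrable_morreyKernel_rpow hq hq2).comp_smul (inv_ne_zero (sqrt_ne_zero'.2 hb))
  calc (∫ y : E2, ‖annularField a b y‖ ^ q) ^ (1 / q)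
      ≤ (∫ y : E2, (2 * π * √b)⁻¹ ^ q * morreyKernel ((√b)⁻¹ • y) ^ q) ^ (1 / q) := by
        refine Real.rpow_le_rpow (integral_nonneg fun y => by positivity)
          (integral_mono_of_nonneg (.of_forall fun y => by positivity) (hint.const_mul _)
            (.of_forall fun y => ?_)) (by positivity)
        dsimp only
        rw [← Real.mul_rpow (by positivity) (morreyKernel_nonneg _)]
        exact Real.rpow_le_rpow (norm_nonneg _) (norm_annularField_le ha hab y) hq0.le
    _ = ((2 * π * √b)⁻¹ ^ q * (b * ∫ z, morreyKernel z ^ q)) ^ (1 / q) := by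
        rw [integral_const_mul, hscale]
    _ = morreyConst q * b ^ (1 / q - 1 / 2) := by
        have hI : 0 ≤ ∫ z, morreyKernel z ^ q :=
          integral_nonneg fun z => rpow_nonneg (morreyKernel_nonneg z) q
        rw [Real.mul_rpow (by positivity) (by positivity), one_div,
          Real.rpow_rpow_inv (by positivity) hq0.ne', Real.mul_rpow hb.le hI, Real.rpow_sub hb,
          ← Real.sqrt_eq_rpow, morreyConst, one_div]
        ring

end PlaneIntegrals

section Holder

variable {X F : Type*} [MeasurableSpace X] {μ : Measure X} [NormedAddCommGroup F] {p q : ℝ}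

lemma memLp_of_integrable_norm_rpow {f : X → F} (hp : 0 < p) (hf : AEStronglyMeasurable f μ)
    (hint : Integrable (fun x => ‖f x‖ ^ p) μ) : MemLp f (ENNReal.ofReal p) μ := by
  rw [← integrable_norm_rpow_iff hf (by simpa using hp) ENNReal.ofReal_ne_top,
    ENNReal.toReal_ofReal hp.le]
  exact hint

lemma norm_integral_le_of_norm_le_mul_Lp [NormedSpace ℝ F] {G H : Type*} [NormedAddCommGroup G]
    [NormedAddCommGroup H] (hpq : p.HolderConjugate q) {g : X → G} {h : X → H} {f : X → F}
    (hg : MemLp g (ENNReal.ofReal p) μ) (hh : MemLp h (ENNReal.ofReal q) μ)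
    (hf : ∀ x, ‖f x‖ ≤ ‖g x‖ * ‖h x‖) :
    ‖∫ x, f x ∂μ‖ ≤ (∫ x, ‖g x‖ ^ p ∂μ) ^ (1 / p) * (∫ x, ‖h x‖ ^ q ∂μ) ^ (1 / q) :=
  have := hpq.ennrealOfReal
  (norm_integral_le_of_norm_le (hg.norm.integrable_mul hh.norm) (.of_forall hf)).trans <| by
    simpa using integral_mul_norm_le_Lp_mul_Lq hpq hg.norm hh.norm

end Holder

section IntegrationByParts

variable {V F G : Type*} [NormedAddCommGroup V] [NormedSpace ℝ V] [NormedAddCommGroup F]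
  [NormedSpace ℝ F] [NormedAddCommGroup G] [NormedSpace ℝ G] [MeasurableSpace V]
  {μ : Measure V}

/-- The fields `η` and `h` are `C¹` and decay enough for `∫ Dη • h = -∫ η • Dh` to hold without
boundary terms. -/
structure IntegrableByParts (μ : Measure V) (η : V → G) (h : V → F) : Prop where
  contDiff_left : ContDiff ℝ 1 η
  contDiff_right : ContDiff ℝ 1 h
  integrable_mul : Integrable (fun x => ‖η x‖ * ‖h x‖) μ
  integrable_fderiv_mul : Integrable (fun x => ‖fderiv ℝ η x‖ * ‖h x‖) μ
  integrable_mul_fderiv : Integrable (fun x => ‖η x‖ * ‖fderiv ℝ h x‖) μ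

namespace IntegrableByParts

variable {η : V → G} {h : V → F}

lemma of_memLp {p q r s : ℝ} (hpq : p.HolderConjugate q) (hrs : r.HolderConjugate s)
    (hη : ContDiff ℝ 1 η) (hh : ContDiff ℝ 1 h) (hηp : MemLp η (ENNReal.ofReal p) μ)
    (hηr : MemLp η (ENNReal.ofReal r) μ) (hDη : MemLp (fderiv ℝ η) (ENNReal.ofReal r) μ)
    (hhs : MemLp h (ENNReal.ofReal s) μ) (hDh : MemLp (fderiv ℝ h) (ENNReal.ofReal q) μ) :
    IntegrableByParts μ η h :=
  have := hpq.ennrealOfReal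
  have := hrs.ennrealOfReal
  { contDiff_left := hη
    contDiff_right := hh
    integrable_mul := hηr.norm.integrable_mul hhs.norm
    integrable_fderiv_mul := hDη.norm.integrable_mul hhs.norm
    integrable_mul_fderiv := hηp.norm.integrable_mul hDh.norm }

section

variable [BorelSpace V] [FiniteDimensional ℝ V] (hηh : IntegrableByParts μ η h)
  (ℓ : G →L[ℝ] ℝ) (v : V)
include hηh

lemma integrable_comp_smul : Integrable (fun x => ℓ (η x) • h x) μ := by
  refine (hηh.integrable_mul.const_mul ‖ℓ‖).mono'
    ((ℓ.continuous.comp hηh.contDiff_left.continuous).smul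
      hηh.contDiff_right.continuous).aestronglyMeasurable (.of_forall fun x => ?_)
  rw [norm_smul, ← mul_assoc]
  gcongr
  exact ℓ.le_opNorm _

lemma integrable_comp_fderiv_smul :
    Integrable (fun x => ℓ (fderiv ℝ η x v) • h x) μ := by
  refine (hηh.integrable_fderiv_mul.const_mul (‖ℓ‖ * ‖v‖)).mono'
    ((ℓ.continuous.comp ((hηh.contDiff_left.continuous_fderiv one_ne_zero).clm_apply
      continuous_const)).smul hηh.contDiff_right.continuous).aestronglyMeasurable
    (.of_forall fun x => ?_)
  calc ‖ℓ (fderiv ℝ η x v) • h x‖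
      ≤ ‖ℓ‖ * (‖fderiv ℝ η x‖ * ‖v‖) * ‖h x‖ := by
        rw [norm_smul]
        gcongr
        exact ℓ.le_opNorm_of_le ((fderiv ℝ η x).le_opNorm v)
    _ = ‖ℓ‖ * ‖v‖ * (‖fderiv ℝ η x‖ * ‖h x‖) := by ring

lemma integrable_comp_smul_fderiv :
    Integrable (fun x => ℓ (η x) • fderiv ℝ h x v) μ := by
  refine (hηh.integrable_mul_fderiv.const_mul (‖ℓ‖ * ‖v‖)).mono'
    ((ℓ.continuous.comp hηh.contDiff_left.continuous).smul
      ((hηh.contDiff_right.continuous_fderiv one_ne_zero).clm_apply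
        continuous_const)).aestronglyMeasurable (.of_forall fun x => ?_)
  calc ‖ℓ (η x) • fderiv ℝ h x v‖
      ≤ ‖ℓ‖ * ‖η x‖ * (‖fderiv ℝ h x‖ * ‖v‖) := by
        rw [norm_smul]
        gcongr
        exacts [ℓ.le_opNorm _, (fderiv ℝ h x).le_opNorm v]
    _ = ‖ℓ‖ * ‖v‖ * (‖η x‖ * ‖fderiv ℝ h x‖) := by ring

lemma integral_fderiv_smul [μ.IsAddHaarMeasure] :
    ∫ x, ℓ (fderiv ℝ η x v) • h x ∂μ = -∫ x, ℓ (η x) • fderiv ℝ h x v ∂μ := by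
  have hη (x : V) : HasFDerivAt (fun x => ℓ (η x)) (ℓ ∘L fderiv ℝ η x) x :=
    ℓ.hasFDerivAt.comp x (hηh.contDiff_left.differentiable one_ne_zero x).hasFDerivAt
  have hfderiv (x : V) : fderiv ℝ (fun x => ℓ (η x)) x v = ℓ (fderiv ℝ η x v) := by
    rw [(hη x).fderiv, ContinuousLinearMap.comp_apply]
  have := integral_smul_fderiv_eq_neg_fderiv_smul_of_integrable (v := v) (μ := μ)
    (by simpa only [hfderiv] using hηh.integrable_comp_fderiv_smul ℓ v)
    (hηh.integrable_comp_smul_fderiv ℓ v) (hηh.integrable_comp_smul ℓ)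
    (fun x _ => (hη x).differentiableAt)
    (fun x _ => hηh.contDiff_right.differentiable one_ne_zero x)
  rw [this, neg_neg]
  simp only [hfderiv]

end

/-- Both sides equal `-∫ ℓ(η) • D²u(v, w)`, by parts and the symmetry of the second derivative. -/
lemma integral_fderiv_smul_fderiv_comm [BorelSpace V] [FiniteDimensional ℝ V]
    [μ.IsAddHaarMeasure] {u : V → F} (hηu : IntegrableByParts μ η (fderiv ℝ u))
    (hu : ContDiff ℝ 2 u) (ℓ : G →L[ℝ] ℝ) (v w : V) :
    (∫ x, ℓ (fderiv ℝ η x v) • fderiv ℝ u x ∂μ) w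
      = (∫ x, ℓ (fderiv ℝ η x w) • fderiv ℝ u x ∂μ) v := by
  rw [hηu.integral_fderiv_smul ℓ v, hηu.integral_fderiv_smul ℓ w, neg_apply, neg_apply,
    ContinuousLinearMap.integral_apply (hηu.integrable_comp_smul_fderiv ℓ v),
    ContinuousLinearMap.integral_apply (hηu.integrable_comp_smul_fderiv ℓ w)]
  congr 2 with x
  have hsymm : IsSymmSndFDerivAt ℝ u x := hu.contDiffAt.isSymmSndFDerivAt (by simp)
  rw [smul_apply, smul_apply, hsymm.eq]

end IntegrableByParts

end IntegrationByParts

section ApproximateIdentity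

variable {F : Type*} [NormedAddCommGroup F] [NormedSpace ℝ F] {a : ℝ}

lemma norm_regDelta_le (ha : 0 < a) (y : E2) : ‖regDelta a y‖ ≤ (π * a)⁻¹ := by
  rw [Real.norm_of_nonneg (regDelta_nonneg ha.le y), regDelta, ← one_div,
    div_le_div_iff₀ (by positivity) (by positivity)]
  have : a ^ 2 ≤ (a + ‖y‖ ^ 2) ^ 2 := by gcongr; linarith [sq_nonneg ‖y‖]
  nlinarith [pi_pos]

lemma norm_regDelta_mul_norm_sq_le (ha : 0 < a) (y : E2) : ‖regDelta a y * ‖y‖ ^ 2‖ ≤ π⁻¹ := by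
  rw [Real.norm_of_nonneg (mul_nonneg (regDelta_nonneg ha.le y) (sq_nonneg _)), regDelta,
    ← one_div, div_mul_eq_mul_div, div_le_div_iff₀ (by positivity) pi_pos]
  have : a * ‖y‖ ^ 2 ≤ (a + ‖y‖ ^ 2) ^ 2 := by nlinarith [sq_nonneg ‖y‖, sq_nonneg (‖y‖ ^ 2)]
  nlinarith [pi_pos]

lemma continuous_regDelta_mul_norm_sq (ha : 0 < a) :
    Continuous fun y : E2 => regDelta a y * ‖y‖ ^ 2 :=
  (continuous_regDelta ha).mul (continuous_norm.pow 2)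

lemma inv_sqrt_sq_mul_regDelta_one (ha : 0 < a) (y : E2) :
    (√a)⁻¹ ^ 2 * regDelta 1 ((√a)⁻¹ • y) = regDelta a y := by
  rw [regDelta, regDelta, norm_smul, Real.norm_of_nonneg (by positivity), mul_pow, inv_pow,
    sq_sqrt ha.le]
  field_simp

lemma tendsto_norm_sq_mul_regDelta_one_cobounded :
    Filter.Tendsto (fun y : E2 => ‖y‖ ^ 2 * regDelta 1 y) (Bornology.cobounded E2) (𝓝 0) := by
  have hbound (y : E2) : ‖y‖ ^ 2 * regDelta 1 y ≤ (1 + ‖y‖ ^ 2)⁻¹ := by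
    rw [regDelta, ← one_div, mul_one_div, div_le_div_iff₀ (by positivity) (by positivity)]
    have : ‖y‖ ^ 2 * (1 + ‖y‖ ^ 2) ≤ 1 * (1 + ‖y‖ ^ 2) ^ 2 := by nlinarith [sq_nonneg ‖y‖]
    nlinarith [pi_gt_three, sq_nonneg (1 + ‖y‖ ^ 2)]
  exact squeeze_zero (fun y => mul_nonneg (sq_nonneg _) (regDelta_nonneg one_pos.le y)) hbound
    ((tendsto_inv_const_add_sq_atTop 1).comp tendsto_norm_cobounded_atTop)

lemma tendsto_integral_regDelta_smul_of_integrable [CompleteSpace F] {g : E2 → F}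
    (hg : Integrable g) (hg0 : ContinuousAt g 0) :
    Filter.Tendsto (fun a => ∫ y, regDelta a y • g y) (𝓝[>] 0) (𝓝 (g 0)) := by
  have hinv : Filter.Tendsto (fun a => (√a)⁻¹) (𝓝[>] 0) Filter.atTop :=
    Filter.Tendsto.inv_tendsto_nhdsGT_zero <| tendsto_nhdsWithin_iff.2
      ⟨(by simpa using (continuous_sqrt.tendsto 0).mono_left nhdsWithin_le_nhds),
        eventually_mem_nhdsWithin.mono fun a ha => sqrt_pos.2 ha⟩
  refine ((tendsto_integral_comp_smul_smul_of_integrable (regDelta_nonneg zero_le_one)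
    (integral_regDelta one_pos) (by simpa using tendsto_norm_sq_mul_regDelta_one_cobounded)
    hg hg0).comp hinv).congr' ?_
  filter_upwards [self_mem_nhdsWithin] with a ha
  simp [← inv_sqrt_sq_mul_regDelta_one ha]

lemma tendsto_integral_regDelta_mul_norm_sq_smul {g : E2 → F} (hg : Integrable g) :
    Filter.Tendsto (fun a => ∫ y, (regDelta a y * ‖y‖ ^ 2) • g y) (𝓝[>] 0) (𝓝 0) := by
  have hpointwise (y : E2) :
      Filter.Tendsto (fun a => (regDelta a y * ‖y‖ ^ 2) • g y) (𝓝[>] 0) (𝓝 0) := by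
    rcases eq_or_ne y 0 with rfl | hy
    · simp
    have : 0 < ‖y‖ := norm_pos_iff.2 hy
    have hcont : ContinuousAt (fun a => (regDelta a y * ‖y‖ ^ 2) • g y) 0 := by
      unfold regDelta
      fun_prop (disch := positivity)
    simpa [regDelta] using hcont.tendsto.mono_left nhdsWithin_le_nhds
  simpa using tendsto_integral_filter_of_dominated_convergence (fun y => π⁻¹ * ‖g y‖)
    (by
      filter_upwards [self_mem_nhdsWithin] with a ha
      exact (continuous_regDelta_mul_norm_sq ha).aestronglyMeasurable.smul hg.aestronglyMeasurable)
    (by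
      filter_upwards [self_mem_nhdsWithin] with a ha
      refine .of_forall fun y => ?_
      rw [norm_smul]
      gcongr
      exact norm_regDelta_mul_norm_sq_le ha y)
    (hg.norm.const_mul _) (.of_forall hpointwise)

/-- The weight splits `h` into `g + ‖y‖² g` with `g` integrable, and the second part disappears in
the limit. -/
lemma tendsto_integral_regDelta_smul [CompleteSpace F] {h : E2 → F}
    (hint : Integrable fun y => (1 + ‖y‖ ^ 2)⁻¹ • h y) (hh : ContinuousAt h 0) :
    Filter.Tendsto (fun a => ∫ y, regDelta a y • h y) (𝓝[>] 0) (𝓝 (h 0)) := by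
  have hg0 : ContinuousAt (fun y : E2 => (1 + ‖y‖ ^ 2)⁻¹ • h y) 0 :=
    (contDiff_inv_add_norm_sq one_pos (n := 0)).continuous.continuousAt.smul hh
  have hlim := (tendsto_integral_regDelta_smul_of_integrable hint hg0).add
    (tendsto_integral_regDelta_mul_norm_sq_smul hint)
  simp only [norm_zero, ne_eq, OfNat.ofNat_ne_zero, not_false_eq_true, zero_pow, add_zero, inv_one,
    one_smul] at hlim
  refine hlim.congr' ?_
  filter_upwards [self_mem_nhdsWithin] with a ha
  have hconcentrated := hint.bdd_smul _ (continuous_regDelta ha).aestronglyMeasurable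
    (.of_forall (norm_regDelta_le ha))
  have hremainder := hint.bdd_smul _ (continuous_regDelta_mul_norm_sq ha).aestronglyMeasurable
    (.of_forall (norm_regDelta_mul_norm_sq_le ha))
  refine (integral_add hconcentrated hremainder).symm.trans (integral_congr_ae (.of_forall ?_))
  intro y
  simp only [Pi.smul_apply', smul_smul, ← add_smul]
  congr 1
  field_simp

end ApproximateIdentity

section Morrey

variable {F : Type*} [NormedAddCommGroup F] [NormedSpace ℝ F] {a b p q r : ℝ}

namespace IntegrableByParts

variable {η : E2 → E2} {h : E2 → F} (hηh : IntegrableByParts volume η h)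
include hηh

lemma integral_div2_smul_eq_sum :
    ∫ x, div2 η x • h x = ∑ i, ∫ x, fderiv ℝ η x (e2 i) i • h x := by
  simp only [div2, Finset.sum_smul]
  exact integral_finsetSum _ fun i _ =>
    hηh.integrable_comp_fderiv_smul (EuclideanSpace.proj i) (e2 i)

lemma integral_div2_smul : ∫ x, div2 η x • h x = -∫ x, fderiv ℝ h x (η x) := by
  have hexpand (x : E2) : fderiv ℝ h x (η x) = ∑ i, η x i • fderiv ℝ h x (e2 i) := by
    conv_lhs => rw [← (EuclideanSpace.basisFun (Fin 2) ℝ).sum_repr (η x)]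
    simp [e2]
  calc ∫ x, div2 η x • h x
      = ∑ i, ∫ x, fderiv ℝ η x (e2 i) i • h x := hηh.integral_div2_smul_eq_sum
    _ = ∑ i, -∫ x, η x i • fderiv ℝ h x (e2 i) :=
        Finset.sum_congr rfl fun i _ => hηh.integral_fderiv_smul (EuclideanSpace.proj i) (e2 i)
    _ = -∫ x, fderiv ℝ h x (η x) := by
        simp only [hexpand, Finset.sum_neg_distrib]
        exact congrArg Neg.neg (integral_finsetSum _ fun i _ =>
          hηh.integrable_comp_smul_fderiv (EuclideanSpace.proj i) (e2 i)).symm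

end IntegrableByParts

lemma integrableByParts_annularField (ha : 0 < a) (hab : a ≤ b) (hp : 1 < p) (hr : 1 < r)
    {h : E2 → F} (hh : ContDiff ℝ 1 h) (hhr : MemLp h (ENNReal.ofReal r))
    (hDh : MemLp (fderiv ℝ h) (ENNReal.ofReal p)) :
    IntegrableByParts volume (annularField a b) h := by
  have hpq := (Real.HolderConjugate.conjExponent hp).symm
  have hrs := (Real.HolderConjugate.conjExponent hr).symm
  have hfinrank {q : ℝ} (hq : 1 < q) : (Module.finrank ℝ E2 : ℝ) < 2 * q := by simpa using hq
  exact .of_memLp hpq hrs (contDiff_annularField ha (ha.trans_le hab)) hh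
    (memLp_annularField ha hab (hfinrank hpq.lt)) (memLp_annularField ha hab (hfinrank hrs.lt))
    (memLp_fderiv_annularField ha hab (hfinrank hrs.lt)) hhr hDh

lemma memLp_regDelta_plane (ha : 0 < a) (hq : 1 < q) :
    MemLp (regDelta a : E2 → ℝ) (ENNReal.ofReal q) :=
  memLp_regDelta ha (memLp_inv_add_norm_sq ha (by simpa using hq))

lemma lt_two_of_holderConjugate (hqp : q.HolderConjugate p) (hp : 2 < p) : q < 2 := by
  rw [hqp.symm.conjugate_eq, div_lt_iff₀ (by linarith)]
  linarith

variable {h : E2 → F}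

lemma integral_regDelta_smul_sub (ha : 0 < a) (hab : a ≤ b) (hr : 1 < r)
    (hhr : MemLp h (ENNReal.ofReal r)) :
    (∫ y, regDelta a y • h y) - ∫ y, regDelta b y • h y = ∫ y, div2 (annularField a b) y • h y := by
  have hrs := (Real.HolderConjugate.conjExponent hr).symm
  have := hrs.ennrealOfReal
  have hint {c : ℝ} (hc : 0 < c) : Integrable fun y => regDelta c y • h y :=
    memLp_one_iff_integrable.1 (hhr.smul (memLp_regDelta_plane hc hrs.lt))
  rw [← integral_sub (hint ha) (hint (ha.trans_le hab))]
  simp only [div2_annularField ha (ha.trans_le hab), sub_smul]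

lemma norm_integral_div2_annularField_smul_le (ha : 0 < a) (hab : a ≤ b)
    (hqp : q.HolderConjugate p) (hp : 2 < p) (hr : 1 < r) (hh : ContDiff ℝ 1 h)
    (hhr : MemLp h (ENNReal.ofReal r)) (hDh : MemLp (fderiv ℝ h) (ENNReal.ofReal p)) :
    ‖∫ y, div2 (annularField a b) y • h y‖
      ≤ morreyConst q * b ^ (1 / q - 1 / 2) * (∫ y, ‖fderiv ℝ h y‖ ^ p) ^ (1 / p) := by
  have hparts := integrableByParts_annularField ha hab hqp.symm.lt hr hh hhr hDh
  rw [hparts.integral_div2_smul, norm_neg]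
  refine (norm_integral_le_of_norm_le_mul_Lp hqp
    (memLp_annularField ha hab (by simpa using hqp.lt)) hDh fun y => ?_).trans ?_
  · exact ((fderiv ℝ h y).le_opNorm _).trans_eq (mul_comm _ _)
  · gcongr
    exact integral_norm_annularField_rpow_le ha hab hqp.lt (lt_two_of_holderConjugate hqp hp)

lemma norm_sub_integral_regDelta_smul_le [CompleteSpace F] (hb : 0 < b)
    (hqp : q.HolderConjugate p) (hp : 2 < p) (hr : 1 < r) (hh : ContDiff ℝ 1 h)
    (hhr : MemLp h (ENNReal.ofReal r)) (hDh : MemLp (fderiv ℝ h) (ENNReal.ofReal p)) :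
    ‖h 0 - ∫ y, regDelta b y • h y‖
      ≤ morreyConst q * b ^ (1 / q - 1 / 2) * (∫ y, ‖fderiv ℝ h y‖ ^ p) ^ (1 / p) := by
  have hrs := (Real.HolderConjugate.conjExponent hr).symm
  have := hrs.ennrealOfReal
  have hint : Integrable fun y => (1 + ‖y‖ ^ 2)⁻¹ • h y :=
    memLp_one_iff_integrable.1 (hhr.smul (memLp_inv_add_norm_sq one_pos (by simpa using hrs.lt)))
  refine le_of_tendsto ((tendsto_integral_regDelta_smul hint
    hh.continuous.continuousAt).sub_const _).norm ?_
  filter_upwards [Ioc_mem_nhdsGT hb] with a ⟨ha, hab⟩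
  rw [integral_regDelta_smul_sub ha hab hr hhr]
  exact norm_integral_div2_annularField_smul_le ha hab hqp hp hr hh hhr hDh

end Morrey

section CalderonZygmund

lemma norm_le_sum_abs_apply {ι : Type*} [Fintype ι] (w : EuclideanSpace ℝ ι) :
    ‖w‖ ≤ ∑ k, |w k| := by
  classical
  conv_lhs => rw [← (EuclideanSpace.basisFun ι ℝ).sum_repr w]
  exact (norm_sum_le _ _).trans_eq (by simp [norm_smul])

lemma opNorm_le_sum_abs_apply {ι κ : Type*} [Fintype ι] [DecidableEq ι] [Fintype κ]
    (T : EuclideanSpace ℝ ι →L[ℝ] EuclideanSpace ℝ κ) :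
    ‖T‖ ≤ ∑ i, ∑ k, |T (EuclideanSpace.single i 1) k| := by
  refine T.opNorm_le_bound (by positivity) fun v => ?_
  conv_lhs => rw [← (EuclideanSpace.basisFun ι ℝ).sum_repr v, map_sum]
  rw [Finset.sum_mul]
  refine norm_sum_le_of_le _ fun i _ => ?_
  rw [map_smul, norm_smul, EuclideanSpace.basisFun_repr, EuclideanSpace.basisFun_apply, mul_comm]
  gcongr
  exacts [norm_le_sum_abs_apply _, PiLp.norm_apply_le v i]

/-- The integral `∫ (∂ₗ ηᵐ) Du`, in which integration by parts exchanges `∂ₗ` with a derivative of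
`u`. -/
def gradMoment (η u : E2 → E2) (l m : Fin 2) : E2 →L[ℝ] E2 :=
  ∫ x, fderiv ℝ η x (e2 l) m • fderiv ℝ u x

variable {η u : E2 → E2}

namespace IntegrableByParts

variable (hηu : IntegrableByParts volume η (fderiv ℝ u))
include hηu

lemma gradMoment_apply_comm (hu : ContDiff ℝ 2 u) (l m i : Fin 2) :
    gradMoment η u l m (e2 i) = gradMoment η u i m (e2 l) :=
  hηu.integral_fderiv_smul_fderiv_comm hu (EuclideanSpace.proj m) (e2 l) (e2 i)

lemma integrable_fderiv_mul_fderiv (l m i k : Fin 2) :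
    Integrable fun x => fderiv ℝ η x (e2 l) m * fderiv ℝ u x (e2 i) k :=
  (EuclideanSpace.proj k ∘L ContinuousLinearMap.apply ℝ E2 (e2 i)).integrable_comp
    (hηu.integrable_comp_fderiv_smul (EuclideanSpace.proj m) (e2 l))

lemma gradMoment_apply (l m i k : Fin 2) :
    gradMoment η u l m (e2 i) k = ∫ x, fderiv ℝ η x (e2 l) m * fderiv ℝ u x (e2 i) k :=
  ((EuclideanSpace.proj k ∘L ContinuousLinearMap.apply ℝ E2 (e2 i)).integral_comp_comm
    (hηu.integrable_comp_fderiv_smul (EuclideanSpace.proj m) (e2 l))).symm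

/-- By parts, `∫ (∂ₗ ηˡ) ∂ᵢ uᵏ = ∫ (∂ᵢ ηˡ) ∂ₗ uᵏ`. Replacing `∂ₗ uᵏ` by `∂ₖ uˡ` costs an entry of
the curl, and the symmetry of `Dη` turns what remains into `∫ (∂ᵢ ηᵏ) ∂ₗ uˡ`. -/
lemma integral_div2_smul_fderiv_apply (hu : ContDiff ℝ 2 u)
    (hsymm : ∀ x i j, fderiv ℝ η x (e2 i) j = fderiv ℝ η x (e2 j) i) (i k : Fin 2) :
    (∫ x, div2 η x • fderiv ℝ u x) (e2 i) k = (∫ x, fderiv ℝ η x (e2 i) k * div2 u x) +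
      ∑ l, ∫ x, fderiv ℝ η x (e2 i) l * (fderiv ℝ u x (e2 l) k - fderiv ℝ u x (e2 k) l) := by
  have hmoment_symm (l m : Fin 2) : gradMoment η u l m = gradMoment η u m l := by
    simp only [gradMoment, hsymm _ l m]
  have hcomm := hηu.gradMoment_apply_comm hu
  have hdiv : ∑ l, gradMoment η u i k (e2 l) l = ∫ x, fderiv ℝ η x (e2 i) k * div2 u x := by
    simp only [hηu.gradMoment_apply, div2, Finset.mul_sum]
    exact (integral_finsetSum _ fun l _ => hηu.integrable_fderiv_mul_fderiv i k l l).symm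
  have hrot (l : Fin 2) : gradMoment η u i l (e2 l) k - gradMoment η u i l (e2 k) l =
      ∫ x, fderiv ℝ η x (e2 i) l * (fderiv ℝ u x (e2 l) k - fderiv ℝ u x (e2 k) l) := by
    simp only [hηu.gradMoment_apply, mul_sub]
    exact (integral_sub (hηu.integrable_fderiv_mul_fderiv i l l k)
      (hηu.integrable_fderiv_mul_fderiv i l k l)).symm
  have hexchange (l : Fin 2) : gradMoment η u i l (e2 k) = gradMoment η u i k (e2 l) := by
    rw [hcomm, hmoment_symm, hcomm]
  calc (∫ x, div2 η x • fderiv ℝ u x) (e2 i) k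
      = ∑ l, gradMoment η u l l (e2 i) k := by
        simp [hηu.integral_div2_smul_eq_sum, gradMoment]
    _ = ∑ l, (gradMoment η u i k (e2 l) l +
          (gradMoment η u i l (e2 l) k - gradMoment η u i l (e2 k) l)) := by
        simp only [hexchange, hcomm _ _ i, add_sub_cancel]
    _ = _ := by simp only [Finset.sum_add_distrib, hdiv, hrot]

end IntegrableByParts

lemma norm_integral_fderiv_apply_mul_le (hη : Integrable (fderiv ℝ η)) {f : E2 → ℝ} {K : ℝ}
    (hf : ∀ᵐ x, ‖f x‖ ≤ K) (i k : Fin 2) :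
    ‖∫ x, fderiv ℝ η x (e2 i) k * f x‖ ≤ K * ∫ x, ‖fderiv ℝ η x‖ := by
  rw [← integral_const_mul]
  refine norm_integral_le_of_norm_le (hη.norm.const_mul K) ?_
  filter_upwards [hf] with x hx
  rw [norm_mul, mul_comm K]
  gcongr
  calc ‖fderiv ℝ η x (e2 i) k‖ ≤ ‖fderiv ℝ η x (e2 i)‖ := PiLp.norm_apply_le _ k
    _ ≤ ‖fderiv ℝ η x‖ * ‖e2 i‖ := (fderiv ℝ η x).le_opNorm _
    _ = ‖fderiv ℝ η x‖ := by simp [e2]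

lemma norm_fderiv_apply_sub_le_norm_curl2 (x : E2) (l k : Fin 2) :
    ‖fderiv ℝ u x (e2 l) k - fderiv ℝ u x (e2 k) l‖ ≤ ‖curl2 u x‖ := by
  fin_cases l <;> fin_cases k <;> simp [curl2, abs_sub_comm]

lemma norm_integral_div2_smul_fderiv_le (hηu : IntegrableByParts volume η (fderiv ℝ u))
    (hu : ContDiff ℝ 2 u) (hsymm : ∀ x i j, fderiv ℝ η x (e2 i) j = fderiv ℝ η x (e2 j) i)
    (hη : Integrable (fderiv ℝ η)) {d c : ℝ} (hdiv : ∀ᵐ x, ‖div2 u x‖ ≤ d)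
    (hcurl : ∀ᵐ x, ‖curl2 u x‖ ≤ c) :
    ‖∫ x, div2 η x • fderiv ℝ u x‖ ≤ 4 * (d + 2 * c) * ∫ x, ‖fderiv ℝ η x‖ := by
  have hentry (i k : Fin 2) :
      |(∫ x, div2 η x • fderiv ℝ u x) (e2 i) k| ≤ (d + 2 * c) * ∫ x, ‖fderiv ℝ η x‖ := by
    rw [hηu.integral_div2_smul_fderiv_apply hu hsymm]
    calc |_ + _| ≤ d * (∫ x, ‖fderiv ℝ η x‖) + ∑ _l : Fin 2, c * ∫ x, ‖fderiv ℝ η x‖ := by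
          refine (abs_add_le _ _).trans (add_le_add
            (norm_integral_fderiv_apply_mul_le hη hdiv i k)
            (norm_sum_le_of_le _ fun l _ => norm_integral_fderiv_apply_mul_le hη ?_ i l))
          exact hcurl.mono fun x hx => (norm_fderiv_apply_sub_le_norm_curl2 x l k).trans hx
      _ = (d + 2 * c) * ∫ x, ‖fderiv ℝ η x‖ := by rw [Fin.sum_const, nsmul_eq_mul]; push_cast; ring
  calc ‖∫ x, div2 η x • fderiv ℝ u x‖
      ≤ ∑ i, ∑ k, |(∫ x, div2 η x • fderiv ℝ u x) (e2 i) k| := opNorm_le_sum_abs_apply _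
    _ ≤ ∑ _i : Fin 2, ∑ _k : Fin 2, (d + 2 * c) * ∫ x, ‖fderiv ℝ η x‖ := by
        gcongr with i _ k _
        exact hentry i k
    _ = 4 * (d + 2 * c) * ∫ x, ‖fderiv ℝ η x‖ := by
        simp only [Fin.sum_const, nsmul_eq_mul]; push_cast; ring

end CalderonZygmund

section PointwiseBound

lemma norm_fderiv_fderiv_eq_norm_iteratedFDeriv_two {V F : Type*} [NormedAddCommGroup V]
    [NormedSpace ℝ V] [NormedAddCommGroup F] [NormedSpace ℝ F] (u : V → F) (x : V) :
    ‖fderiv ℝ (fderiv ℝ u) x‖ = ‖iteratedFDeriv ℝ 2 u x‖ := by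
  rw [← norm_iteratedFDeriv_one, norm_iteratedFDeriv_fderiv]

lemma ae_norm_le_toReal_eLpNorm_top {X F : Type*} [MeasurableSpace X] {μ : Measure X}
    [NormedAddCommGroup F] {f : X → F} (hf : eLpNorm f ⊤ μ ≠ ⊤) :
    ∀ᵐ x ∂μ, ‖f x‖ ≤ (eLpNorm f ⊤ μ).toReal := by
  rw [eLpNorm_exponent_top] at hf ⊢
  filter_upwards [ae_le_eLpNormEssSup (f := f) (μ := μ)] with x hx
  simpa using ENNReal.toReal_mono hf hx

lemma nonneg_of_ae_norm_le {X F : Type*} [MeasurableSpace X] {μ : Measure X} [NeZero μ]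
    [SeminormedAddCommGroup F] {f : X → F} {K : ℝ} (hf : ∀ᵐ x ∂μ, ‖f x‖ ≤ K) : 0 ≤ K :=
  let ⟨_, hx⟩ := hf.exists
  (norm_nonneg _).trans hx

variable {p q r s a b d c : ℝ} {u : E2 → E2}

lemma norm_integral_regDelta_sub_le (ha : 0 < a) (hab : a ≤ b) (hp : 1 < p) (hr : 1 < r)
    (hu : ContDiff ℝ 2 u) (hDu : MemLp (fderiv ℝ u) (ENNReal.ofReal r))
    (hD2u : MemLp (fderiv ℝ (fderiv ℝ u)) (ENNReal.ofReal p)) (hdiv : ∀ᵐ x, ‖div2 u x‖ ≤ d)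
    (hcurl : ∀ᵐ x, ‖curl2 u x‖ ≤ c) :
    ‖(∫ y, regDelta a y • fderiv ℝ u y) - ∫ y, regDelta b y • fderiv ℝ u y‖
      ≤ 10 * (d + 2 * c) * log (b / a) := by
  have hDu1 : ContDiff ℝ 1 (fderiv ℝ u) := hu.fderiv_right (by norm_num)
  have hd := nonneg_of_ae_norm_le hdiv
  have hc := nonneg_of_ae_norm_le hcurl
  have hsymm (x : E2) (i j : Fin 2) :
      fderiv ℝ (annularField a b) x (e2 i) j = fderiv ℝ (annularField a b) x (e2 j) i := by
    simpa [e2, EuclideanSpace.inner_single_left, EuclideanSpace.inner_single_right] using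
      inner_fderiv_annularField_left ha (ha.trans_le hab) x (e2 i) (e2 j)
  rw [integral_regDelta_smul_sub ha hab hr hDu]
  calc ‖∫ y, div2 (annularField a b) y • fderiv ℝ u y‖
      ≤ 4 * (d + 2 * c) * ∫ y : E2, ‖fderiv ℝ (annularField a b) y‖ :=
        norm_integral_div2_smul_fderiv_le
          (integrableByParts_annularField ha hab hp hr hDu1 hDu hD2u) hu hsymm
          (integrable_fderiv_annularField ha hab) hdiv hcurl
    _ ≤ 4 * (d + 2 * c) * (5 / 2 * log (b / a)) := by
        gcongr
        exact integral_norm_fderiv_annularField_le ha hab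
    _ = 10 * (d + 2 * c) * log (b / a) := by ring

/-- The `L^s` norm of `regDelta 1`: the constant in the Hölder bound for averages at unit scale. -/
def averageConst (s : ℝ) : ℝ := (∫ y : E2, ‖regDelta 1 y‖ ^ s) ^ (1 / s)

lemma averageConst_nonneg (s : ℝ) : 0 ≤ averageConst s := by
  unfold averageConst
  positivity

lemma norm_fderiv_zero_le (hb : 0 < b) (hb1 : b ≤ 1) (hqp : q.HolderConjugate p) (hp : 2 < p)
    (hsr : s.HolderConjugate r) (hu : ContDiff ℝ 2 u)
    (hDu : MemLp (fderiv ℝ u) (ENNReal.ofReal r))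
    (hD2u : MemLp (fderiv ℝ (fderiv ℝ u)) (ENNReal.ofReal p)) (hdiv : ∀ᵐ x, ‖div2 u x‖ ≤ d)
    (hcurl : ∀ᵐ x, ‖curl2 u x‖ ≤ c) :
    ‖fderiv ℝ u 0‖ ≤
      morreyConst q * b ^ (1 / q - 1 / 2) * (∫ y, ‖fderiv ℝ (fderiv ℝ u) y‖ ^ p) ^ (1 / p) +
      10 * (d + 2 * c) * log b⁻¹ + averageConst s * (∫ y, ‖fderiv ℝ u y‖ ^ r) ^ (1 / r) := by
  have hr := hsr.symm.lt
  have hsmall := norm_sub_integral_regDelta_smul_le hb hqp hp hr (hu.fderiv_right (by norm_num))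
    hDu hD2u
  have hmiddle :=
    norm_integral_regDelta_sub_le hb hb1 hqp.symm.lt hr hu hDu hD2u hdiv hcurl
  rw [one_div] at hmiddle
  have hunit : ‖∫ y, regDelta 1 y • fderiv ℝ u y‖
      ≤ averageConst s * (∫ y, ‖fderiv ℝ u y‖ ^ r) ^ (1 / r) :=
    norm_integral_le_of_norm_le_mul_Lp hsr (memLp_regDelta_plane one_pos hsr.lt) hDu
      fun y => (norm_smul _ _).le
  calc ‖fderiv ℝ u 0‖
      = ‖(fderiv ℝ u 0 - ∫ y, regDelta b y • fderiv ℝ u y) +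
          ((∫ y, regDelta b y • fderiv ℝ u y) - ∫ y, regDelta 1 y • fderiv ℝ u y) +
          ∫ y, regDelta 1 y • fderiv ℝ u y‖ := by
        congr 1; abel
    _ ≤ _ := norm_add₃_le.trans (by gcongr)

lemma norm_fderiv_le (hb : 0 < b) (hb1 : b ≤ 1) (hqp : q.HolderConjugate p) (hp : 2 < p)
    (hsr : s.HolderConjugate r) (hu : ContDiff ℝ 2 u)
    (hDu : MemLp (fderiv ℝ u) (ENNReal.ofReal r))
    (hD2u : MemLp (fderiv ℝ (fderiv ℝ u)) (ENNReal.ofReal p)) (hdiv : ∀ᵐ x, ‖div2 u x‖ ≤ d)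
    (hcurl : ∀ᵐ x, ‖curl2 u x‖ ≤ c) (x : E2) :
    ‖fderiv ℝ u x‖ ≤
      morreyConst q * b ^ (1 / q - 1 / 2) * (∫ y, ‖fderiv ℝ (fderiv ℝ u) y‖ ^ p) ^ (1 / p) +
      10 * (d + 2 * c) * log b⁻¹ + averageConst s * (∫ y, ‖fderiv ℝ u y‖ ^ r) ^ (1 / r) := by
  have hshift := measurePreserving_add_left (volume : Measure E2) x
  have hfderiv : fderiv ℝ (fun y => u (x + y)) = fun y => fderiv ℝ u (x + y) :=
    funext fun y => fderiv_comp_add_left x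
  have hfderiv2 : fderiv ℝ (fun y => fderiv ℝ u (x + y))
      = fun y => fderiv ℝ (fderiv ℝ u) (x + y) :=
    funext fun y => fderiv_comp_add_left x
  have hmemLp {F : Type} [NormedAddCommGroup F] {t : ENNReal} {f : E2 → F} (hf : MemLp f t) :
      MemLp (fun y => f (x + y)) t := hf.comp_measurePreserving hshift
  have hdivx : ∀ᵐ y, ‖div2 (fun y => u (x + y)) y‖ ≤ d := by
    simp only [div2, hfderiv]
    exact hshift.quasiMeasurePreserving.ae hdiv
  have hcurlx : ∀ᵐ y, ‖curl2 (fun y => u (x + y)) y‖ ≤ c := by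
    simp only [curl2, hfderiv]
    exact hshift.quasiMeasurePreserving.ae hcurl
  have := norm_fderiv_zero_le (u := fun y => u (x + y)) hb hb1 hqp hp hsr
    (hu.comp (contDiff_const.add contDiff_id))
    (by rw [hfderiv]; exact hmemLp hDu)
    (by rw [hfderiv, hfderiv2]; exact hmemLp (F := E2 →L[ℝ] E2 →L[ℝ] E2) hD2u) hdivx hcurlx
  simp only [hfderiv, hfderiv2, add_zero] at this
  rwa [integral_add_left_eq_self (fun y => ‖fderiv ℝ u y‖ ^ r) x,
    integral_add_left_eq_self (fun y => ‖fderiv ℝ (fderiv ℝ u) y‖ ^ p) x] at this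

lemma one_div_sub_half_pos (hqp : q.HolderConjugate p) (hp : 2 < p) : 0 < 1 / q - 1 / 2 :=
  sub_pos.2 (one_div_lt_one_div_of_lt hqp.pos (lt_two_of_holderConjugate hqp hp))

lemma one_le_log_exp_one_add {S : ℝ} (hS : 0 ≤ S) : 1 ≤ log (exp 1 + S) := by
  rw [Real.le_log_iff_exp_le (by positivity)]
  linarith

lemma exists_rpow_mul_le_one_and_log_inv_eq {θ S : ℝ} (hθ : 0 < θ) (hS : 0 ≤ S) :
    ∃ b : ℝ, 0 < b ∧ b ≤ 1 ∧ b ^ θ * S ≤ 1 ∧ log b⁻¹ = log (exp 1 + S) / θ := by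
  have he : 1 ≤ exp 1 + S := by linarith [Real.one_le_exp zero_le_one]
  have hpos : 0 < exp 1 + S := by linarith
  refine ⟨(exp 1 + S) ^ (-θ⁻¹), by positivity, Real.rpow_le_one_of_one_le_of_nonpos he
    (neg_nonpos.2 (by positivity)), ?_, ?_⟩
  · rw [← Real.rpow_mul hpos.le, neg_mul, inv_mul_cancel₀ hθ.ne', Real.rpow_neg_one,
      inv_mul_le_one₀ hpos]
    linarith [exp_pos 1]
  · rw [← Real.rpow_neg hpos.le, neg_neg, Real.log_rpow hpos, inv_mul_eq_div]

lemma norm_fderiv_le_log (hqp : q.HolderConjugate p) (hp : 2 < p) (hsr : s.HolderConjugate r)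
    (hu : ContDiff ℝ 2 u) (hDu : MemLp (fderiv ℝ u) (ENNReal.ofReal r))
    (hD2u : MemLp (fderiv ℝ (fderiv ℝ u)) (ENNReal.ofReal p)) (hdiv : ∀ᵐ x, ‖div2 u x‖ ≤ d)
    (hcurl : ∀ᵐ x, ‖curl2 u x‖ ≤ c) (x : E2) :
    ‖fderiv ℝ u x‖ ≤
      20 / (1 / q - 1 / 2) * (d + c) *
          log (exp 1 + (∫ y, ‖fderiv ℝ (fderiv ℝ u) y‖ ^ p) ^ (1 / p)) +
        (averageConst s * (∫ y, ‖fderiv ℝ u y‖ ^ r) ^ (1 / r) + morreyConst q) := by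
  have hd := nonneg_of_ae_norm_le hdiv
  set S := (∫ y, ‖fderiv ℝ (fderiv ℝ u) y‖ ^ p) ^ (1 / p)
  have hS : 0 ≤ S := by positivity
  obtain ⟨b, hb, hb1, hbS, hlog⟩ :=
    exists_rpow_mul_le_one_and_log_inv_eq (one_div_sub_half_pos hqp hp) hS
  have hmorrey : morreyConst q * b ^ (1 / q - 1 / 2) * S ≤ morreyConst q := by
    rw [mul_assoc]
    exact mul_le_of_le_one_right (morreyConst_nonneg q) hbS
  have hlog_nonneg : 0 ≤ log b⁻¹ := log_nonneg ((one_le_inv₀ hb).2 hb1)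
  have hlogterm : 10 * (d + 2 * c) * log b⁻¹ ≤
      20 / (1 / q - 1 / 2) * (d + c) * log (exp 1 + S) := by
    calc 10 * (d + 2 * c) * log b⁻¹ ≤ 10 * (2 * (d + c)) * log b⁻¹ := by
          gcongr
          linarith
      _ = 20 / (1 / q - 1 / 2) * (d + c) * log (exp 1 + S) := by rw [hlog]; ring
  linarith [norm_fderiv_le hb hb1 hqp hp hsr hu hDu hD2u hdiv hcurl x]

lemma exists_forall_norm_fderiv_le (hp : 2 < p) (hr : 1 < r) :
    ∃ C : ℝ, 0 < C ∧ ∀ u : E2 → E2, ContDiff ℝ 2 u →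
      MemLp (fderiv ℝ u) (ENNReal.ofReal r) →
      MemLp (fderiv ℝ (fderiv ℝ u)) (ENNReal.ofReal p) →
      ∀ d c : ℝ, (∀ᵐ x, ‖div2 u x‖ ≤ d) → (∀ᵐ x, ‖curl2 u x‖ ≤ c) →
      ∀ x, ‖fderiv ℝ u x‖ ≤
        C * (d + c) * log (exp 1 + (∫ y, ‖fderiv ℝ (fderiv ℝ u) y‖ ^ p) ^ (1 / p)) +
          (C * (∫ y, ‖fderiv ℝ u y‖ ^ r) ^ (1 / r) + C) := by
  have hqp := (Real.HolderConjugate.conjExponent (one_lt_two.trans hp)).symm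
  have hsr := (Real.HolderConjugate.conjExponent hr).symm
  set q := conjExponent p
  set s := conjExponent r
  have hlogConst : 0 < 20 / (1 / q - 1 / 2) := div_pos (by norm_num) (one_div_sub_half_pos hqp hp)
  have hM := morreyConst_nonneg q
  have hA := averageConst_nonneg s
  refine ⟨20 / (1 / q - 1 / 2) + averageConst s + morreyConst q, by positivity,
    fun u hu hDu hD2u d c hdiv hcurl x => ?_⟩
  have hd := nonneg_of_ae_norm_le hdiv
  have hc := nonneg_of_ae_norm_le hcurl
  have hL := one_le_log_exp_one_add
    (S := (∫ y, ‖fderiv ℝ (fderiv ℝ u) y‖ ^ p) ^ (1 / p)) (by positivity)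
  refine (norm_fderiv_le_log hqp hp hsr hu hDu hD2u hdiv hcurl x).trans ?_
  gcongr <;> linarith

end PointwiseBound

theorem beale_kato_majda_2d_general (p r : ℝ) (hp : 2 < p) (hr : 1 < r) :
    ∃ C : ℝ, 0 < C ∧ ∀ u : E2 → E2, ContDiff ℝ 2 u →
      Integrable (fun x => ‖fderiv ℝ u x‖ ^ r) →
      Integrable (fun x => ‖iteratedFDeriv ℝ 2 u x‖ ^ p) →
      eLpNorm (fun x => ‖fderiv ℝ u x‖) ⊤ volume ≤
        ENNReal.ofReal C * (eLpNorm (div2 u) ⊤ volume + eLpNorm (curl2 u) ⊤ volume) *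
          ENNReal.ofReal
            (Real.log (Real.exp 1 + (∫ x : E2, ‖iteratedFDeriv ℝ 2 u x‖ ^ p) ^ (1 / p))) +
        ENNReal.ofReal (C * (∫ x : E2, ‖fderiv ℝ u x‖ ^ r) ^ (1 / r) + C) := by
  obtain ⟨C, hC, hbound⟩ := exists_forall_norm_fderiv_le hp hr
  refine ⟨C, hC, fun u hu hDu hD2u => ?_⟩
  simp only [← norm_fderiv_fderiv_eq_norm_iteratedFDeriv_two] at hD2u ⊢
  set S := (∫ x, ‖fderiv ℝ (fderiv ℝ u) x‖ ^ p) ^ (1 / p)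
  have hL : 0 < log (exp 1 + S) := one_pos.trans_le (one_le_log_exp_one_add (by positivity))
  by_cases hfin : eLpNorm (div2 u) ⊤ volume + eLpNorm (curl2 u) ⊤ volume = ⊤
  · rw [hfin, ENNReal.mul_top (by simpa using hC), ENNReal.top_mul (by simpa using hL), top_add]
    exact le_top
  obtain ⟨hd, hc⟩ := ENNReal.add_ne_top.1 hfin
  have hDu_cont : ContDiff ℝ 1 (fderiv ℝ u) := hu.fderiv_right (by norm_num)
  have hpoint := hbound u hu
    (memLp_of_integrable_norm_rpow (by linarith) hDu_cont.continuous.aestronglyMeasurable hDu)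
    (memLp_of_integrable_norm_rpow (by linarith)
      (hDu_cont.continuous_fderiv one_ne_zero).aestronglyMeasurable hD2u)
    _ _ (ae_norm_le_toReal_eLpNorm_top hd) (ae_norm_le_toReal_eLpNorm_top hc)
  rw [← ENNReal.ofReal_toReal hfin, ENNReal.toReal_add hd hc, ← ENNReal.ofReal_mul hC.le,
    ← ENNReal.ofReal_mul (by positivity), ← ENNReal.ofReal_add (by positivity) (by positivity),
    eLpNorm_norm, eLpNorm_exponent_top]
  exact eLpNormEssSup_le_of_ae_bound (.of_forall hpoint)

/-- Beale–Kato–Majda type inequality in two dimensions (Lemma 2.8 of the paper). -/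
theorem beale_kato_majda_2d (p : ℝ) (hp : 2 < p) :
    ∃ C : ℝ, 0 < C ∧ ∀ u : E2 → E2, ContDiff ℝ 2 u →
      Integrable (fun x => ‖fderiv ℝ u x‖ ^ 2) →
      Integrable (fun x => ‖fderiv ℝ u x‖ ^ p) →
      Integrable (fun x => ‖iteratedFDeriv ℝ 2 u x‖ ^ p) →
      eLpNorm (fun x => ‖fderiv ℝ u x‖) ⊤ volume ≤
        ENNReal.ofReal C * (eLpNorm (div2 u) ⊤ volume + eLpNorm (curl2 u) ⊤ volume) *
          ENNReal.ofReal
            (Real.log (Real.exp 1 + (∫ x : E2, ‖iteratedFDeriv ℝ 2 u x‖ ^ p) ^ (1 / p))) +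
        ENNReal.ofReal (C * (∫ x : E2, ‖fderiv ℝ u x‖ ^ 2) ^ (1 / 2 : ℝ) + C) := by
  obtain ⟨C, hC, hbound⟩ := beale_kato_majda_2d_general p 2 hp one_lt_two
  exact ⟨C, hC, fun u hu hDu _ hD2u => by simpa using hbound u hu (by simpa using hDu) hD2u⟩
end
end

section
/- Let μ > 0 and μ + λ ≥ 0. For every p ∈ [2,∞) there exists a constant C = C(μ,λ,p) > 0 such that for every Schwartz vector field u : ℝ² → ℝ² and every Schwartz function P : ℝ² → ℝ, setting F := μΔu + (μ+λ)∇(div u) − ∇P and G := (2μ+λ) div u − P, one has ‖∇G‖_{L^p(ℝ²)} + ‖∇(curl u)‖_{L^p(ℝ²)} ≤ C‖F‖_{L^p(ℝ²)}. -/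
open MeasureTheory Real Set Metric

noncomputable section

/-- Componentwise Laplacian of a vector field: (Δu)ⁱ = ∑ⱼ ∂ⱼ∂ⱼuⁱ. -/
def lapVec (u : E2 → E2) (x : E2) (i : Fin 2) : ℝ :=
  ∑ j, fderiv ℝ (fun y => fderiv ℝ u y (e2 j) i) x (e2 j)

/-- The momentum flux F = μΔu + (μ+λ)∇(div u) − ∇P. -/
def NSflux (μ lam : ℝ) (u : E2 → E2) (P : E2 → ℝ) (x : E2) : E2 :=
  (EuclideanSpace.equiv (Fin 2) ℝ).symm fun i =>
    μ * lapVec u x i + (μ + lam) * fderiv ℝ (div2 u) x (e2 i) - fderiv ℝ P x (e2 i)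

/-!
The identity `F = ∇G + ∇⊥(μ curl u)` turns the estimate into a statement about the complex potential
`H = G + iμ curl u`: pointwise `2|∂H| = |F|`, and `|∇G|`, `μ|∇ curl u|` are at most `|∂H| + |∂̄H|`.
It therefore suffices to bound `∂̄H` by `∂H` in `L^p`, which is the `L^p` theory of the Beurling
transform for `p ≥ 2`.

For `p = 2`, integration by parts gives `‖∂̄H‖₂ = ‖∂H‖₂`. Convolving with a truncated Cauchy kernel
localises this: on a ball of radius comparable to `r`, the `L²` norm of `∂̄H` minus its average at
scale `r` is controlled by the `L²` norm of `∂H` on a slightly larger ball. Hence, on balls where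
the mean of `|∂̄H|²` is at most `t`, the mass of `|∂̄H|²` at heights above `N t` is controlled by
that of `|∂H|²`. For `p > 2` one selects by a stopping rule, for each height `t`, balls on which
the mean of `|∂̄H|² + M|∂H|²` is about `t`, sums these estimates by Vitali's covering lemma,
integrates over `t`, and absorbs the `∂̄H` term on the right by taking `M` large.
-/

open Filter Complex ComplexConjugate
open scoped SchwartzMap LineDeriv ENNReal NNReal Convolution Topology ContDiff

lemma fderiv_comp_const_sub {E F : Type*} [NormedAddCommGroup E] [NormedSpace ℝ E]
    [NormedAddCommGroup F] [NormedSpace ℝ F] {f : E → F} {x z : E}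
    (hf : DifferentiableAt ℝ f (x - z)) (v : E) :
    fderiv ℝ (fun w => f (x - w)) z v = -fderiv ℝ f (x - z) v := by
  have hsub : HasFDerivAt (fun w => x - w) (-ContinuousLinearMap.id ℝ E) z :=
    (hasFDerivAt_id z).const_sub x
  rw [show (fun w => f (x - w)) = f ∘ fun w => x - w from rfl, (hf.hasFDerivAt.comp z hsub).fderiv]
  simp

section SchwartzDerivatives

variable {E F : Type*} [NormedAddCommGroup E] [NormedSpace ℝ E] [NormedAddCommGroup F]
  [NormedSpace ℝ F]

lemma coe_lineDerivOp_eq_fderiv (f : 𝓢(E, F)) (v : E) :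
    ⇑(∂_{v} f : 𝓢(E, F)) = fun x => fderiv ℝ f x v :=
  funext fun x => SchwartzMap.lineDerivOp_apply_eq_fderiv v f x

lemma continuous_fderiv_schwartz (f : 𝓢(E, F)) : Continuous (fderiv ℝ f) :=
  (f.smooth 1).continuous_fderiv one_ne_zero

lemma lineDerivOp_comm (f : 𝓢(E, F)) (v w : E) :
    (∂_{v} (∂_{w} f) : 𝓢(E, F)) = ∂_{w} (∂_{v} f) := by
  have second (v w : E) (x : E) :
      (∂_{v} (∂_{w} f) : 𝓢(E, F)) x = fderiv ℝ (fderiv ℝ f) x v w := by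
    have hdiff : DifferentiableAt ℝ (fderiv ℝ f) x :=
      ((f.smooth 2).fderiv_right (m := 1) le_rfl).differentiable one_ne_zero x
    rw [SchwartzMap.lineDerivOp_apply_eq_fderiv, coe_lineDerivOp_eq_fderiv,
      fderiv_clm_apply hdiff (differentiableAt_const _)]
    simp
  ext x
  rw [second, second]
  exact ((f.smooth 2).contDiffAt.isSymmSndFDerivAt (by simp)).eq v w

lemma integral_lineDerivOp_mul_lineDerivOp_comm [MeasurableSpace E] [BorelSpace E]
    [FiniteDimensional ℝ E] (μ : Measure E) [μ.IsAddHaarMeasure] (f g : 𝓢(E, ℂ)) (v w : E) :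
    ∫ x, (∂_{v} f : 𝓢(E, ℂ)) x * (∂_{w} g : 𝓢(E, ℂ)) x ∂μ =
      ∫ x, (∂_{w} f : 𝓢(E, ℂ)) x * (∂_{v} g : 𝓢(E, ℂ)) x ∂μ := by
  rw [SchwartzMap.integral_mul_lineDerivOp_right_eq_neg_left,
    SchwartzMap.integral_mul_lineDerivOp_right_eq_neg_left, lineDerivOp_comm]

lemma integrable_schwartz_mul [MeasurableSpace E] [BorelSpace E] [FiniteDimensional ℝ E]
    (μ : Measure E) [μ.IsAddHaarMeasure] (f g : 𝓢(E, ℂ)) : Integrable (fun x => f x * g x) μ :=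
  (f.memLp 2 μ).integrable_mul (g.memLp 2 μ)

end SchwartzDerivatives

section Wirtinger

/-- The Wirtinger derivative `∂f = (∂ₓf - i ∂_yf) / 2` of a function of a complex variable. -/
def wirtinger (f : ℂ → ℂ) (z : ℂ) : ℂ := (fderiv ℝ f z 1 - I * fderiv ℝ f z I) / 2

/-- The conjugate Wirtinger derivative `∂̄f = (∂ₓf + i ∂_yf) / 2`, which vanishes where `f` is
holomorphic. -/
def wirtingerBar (f : ℂ → ℂ) (z : ℂ) : ℂ := (fderiv ℝ f z 1 + I * fderiv ℝ f z I) / 2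

lemma fderiv_apply_eq_wirtinger (f : ℂ → ℂ) (z v : ℂ) :
    fderiv ℝ f z v = wirtinger f z * v + wirtingerBar f z * conj v := by
  have hv : fderiv ℝ f z v = v.re * fderiv ℝ f z 1 + v.im * fderiv ℝ f z I := by
    conv_lhs => rw [← re_add_im v, ← mul_one (v.re : ℂ), ← real_smul, ← real_smul, map_add,
      map_smul, map_smul, real_smul, real_smul]
  have hconj : conj v = v.re - v.im * I := by simp [Complex.ext_iff]
  rw [hv, wirtinger, wirtingerBar, hconj]
  nth_rw 3 [← re_add_im v]
  linear_combination (v.im * fderiv ℝ f z I) * I_sq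

lemma norm_fderiv_le_wirtinger (f : ℂ → ℂ) (z : ℂ) :
    ‖fderiv ℝ f z‖ ≤ ‖wirtinger f z‖ + ‖wirtingerBar f z‖ := by
  refine ContinuousLinearMap.opNorm_le_bound _ (by positivity) fun v => ?_
  rw [fderiv_apply_eq_wirtinger, add_mul]
  exact (norm_add_le _ _).trans_eq (by simp)

lemma wirtinger_sub {f g : ℂ → ℂ} {z : ℂ} (hf : DifferentiableAt ℝ f z)
    (hg : DifferentiableAt ℝ g z) :
    wirtinger (fun w => f w - g w) z = wirtinger f z - wirtinger g z := by
  simp only [wirtinger, fderiv_fun_sub hf hg, sub_apply]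
  ring

lemma wirtinger_mul {f g : ℂ → ℂ} {z : ℂ} (hf : DifferentiableAt ℝ f z)
    (hg : DifferentiableAt ℝ g z) :
    wirtinger (fun w => f w * g w) z = f z * wirtinger g z + g z * wirtinger f z := by
  simp only [wirtinger, fderiv_fun_mul hf hg, add_apply, smul_apply, smul_eq_mul]
  ring

lemma wirtingerBar_eq_zero {f : ℂ → ℂ} {z : ℂ} (hf : DifferentiableAt ℂ f z) :
    wirtingerBar f z = 0 := by
  have hlin : fderiv ℝ f z I = I * fderiv ℝ f z 1 := by
    rw [hf.fderiv_restrictScalars ℝ, ContinuousLinearMap.coe_restrictScalars', ← smul_eq_mul,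
      ← map_smul, smul_eq_mul, mul_one]
  rw [wirtingerBar, hlin]
  linear_combination (fderiv ℝ f z 1 / 2) * I_mul_I

lemma wirtinger_radial {s : ℝ → ℝ} {z : ℂ} (hs : DifferentiableAt ℝ s (‖z‖ ^ 2)) :
    wirtinger (fun w => (s (‖w‖ ^ 2) : ℂ)) z = deriv s (‖z‖ ^ 2) * conj z := by
  have hderiv := (ofRealCLM.hasFDerivAt.comp z (hs.hasDerivAt.comp_hasFDerivAt z
    (hasStrictFDerivAt_norm_sq z).hasFDerivAt)).fderiv
  have hconj : conj z = z.re - z.im * I := by simp [Complex.ext_iff]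
  change (fderiv ℝ (ofRealCLM ∘ s ∘ fun w => ‖w‖ ^ 2) z 1 -
    I * fderiv ℝ (ofRealCLM ∘ s ∘ fun w => ‖w‖ ^ 2) z I) / 2 = _
  rw [hderiv, hconj]
  simp [Complex.inner]
  ring

lemma contDiff_radial {s : ℝ → ℝ} (hs : ContDiff ℝ ∞ s) :
    ContDiff ℝ ∞ fun w : ℂ => (s (‖w‖ ^ 2) : ℂ) :=
  ofRealCLM.contDiff.comp (hs.comp (contDiff_norm_sq ℝ))

lemma fderiv_conj (f : ℂ → ℂ) (z v : ℂ) :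
    fderiv ℝ (fun w => conj (f w)) z v = conj (fderiv ℝ f z v) :=
  DFunLike.congr_fun (conjCLE.comp_fderiv (f := f) (x := z)) v

lemma wirtinger_conj (f : ℂ → ℂ) (z : ℂ) :
    wirtinger (fun w => conj (f w)) z = conj (wirtingerBar f z) := by
  simp only [wirtinger, wirtingerBar, fderiv_conj, map_div₀, map_add, map_mul, conj_I, map_ofNat]
  ring

lemma wirtingerBar_conj (f : ℂ → ℂ) (z : ℂ) :
    wirtingerBar (fun w => conj (f w)) z = conj (wirtinger f z) := by
  simp only [wirtinger, wirtingerBar, fderiv_conj, map_div₀, map_sub, map_mul, conj_I, map_ofNat]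
  ring

lemma wirtinger_comp_const_sub {f : ℂ → ℂ} {x z : ℂ} (hf : DifferentiableAt ℝ f (x - z)) :
    wirtinger (fun w => f (x - w)) z = -wirtinger f (x - z) := by
  simp only [wirtinger, fderiv_comp_const_sub hf]
  ring

lemma wirtingerBar_comp_const_sub {f : ℂ → ℂ} {x z : ℂ} (hf : DifferentiableAt ℝ f (x - z)) :
    wirtingerBar (fun w => f (x - w)) z = -wirtingerBar f (x - z) := by
  simp only [wirtingerBar, fderiv_comp_const_sub hf]
  ring

lemma continuous_wirtinger {f : ℂ → ℂ} (hf : ContDiff ℝ 1 f) : Continuous (wirtinger f) := by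
  have := hf.continuous_fderiv one_ne_zero
  unfold wirtinger
  fun_prop

lemma continuous_wirtingerBar {f : ℂ → ℂ} (hf : ContDiff ℝ 1 f) :
    Continuous (wirtingerBar f) := by
  have := hf.continuous_fderiv one_ne_zero
  unfold wirtingerBar
  fun_prop

end Wirtinger

section SchwartzWirtinger

variable (H K : 𝓢(ℂ, ℂ))

lemma memLp_wirtinger (p : ℝ≥0∞) : MemLp (wirtinger H) p := by
  have := (((∂_{(1 : ℂ)} H : 𝓢(ℂ, ℂ)).memLp p).sub
    (((∂_{I} H : 𝓢(ℂ, ℂ)).memLp p).const_mul I)).mul_const (2⁻¹ : ℂ)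
  simp only [coe_lineDerivOp_eq_fderiv, ← div_eq_mul_inv] at this
  exact this

lemma memLp_wirtingerBar (p : ℝ≥0∞) : MemLp (wirtingerBar H) p := by
  have := (((∂_{(1 : ℂ)} H : 𝓢(ℂ, ℂ)).memLp p).add
    (((∂_{I} H : 𝓢(ℂ, ℂ)).memLp p).const_mul I)).mul_const (2⁻¹ : ℂ)
  simp only [coe_lineDerivOp_eq_fderiv, ← div_eq_mul_inv] at this
  exact this

lemma integral_wirtingerBar_mul_wirtinger :
    ∫ z, wirtingerBar H z * wirtinger K z = ∫ z, wirtinger H z * wirtingerBar K z := by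
  have hint (v w : ℂ) := integrable_schwartz_mul volume (∂_{v} H : 𝓢(ℂ, ℂ)) (∂_{w} K)
  have hcomm := integral_lineDerivOp_mul_lineDerivOp_comm volume H K I 1
  have hleft : Integrable fun z => wirtingerBar H z * wirtinger K z :=
    (memLp_wirtingerBar H 2).integrable_mul (memLp_wirtinger K 2)
  have hright : Integrable fun z => wirtinger H z * wirtingerBar K z :=
    (memLp_wirtinger H 2).integrable_mul (memLp_wirtingerBar K 2)
  rw [← sub_eq_zero, ← integral_sub hleft hright]
  calc ∫ z, wirtingerBar H z * wirtinger K z - wirtinger H z * wirtingerBar K z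
      = ∫ z, I / 2 * ((∂_{I} H : 𝓢(ℂ, ℂ)) z * (∂_{(1 : ℂ)} K : 𝓢(ℂ, ℂ)) z -
          (∂_{(1 : ℂ)} H : 𝓢(ℂ, ℂ)) z * (∂_{I} K : 𝓢(ℂ, ℂ)) z) := by
        simp only [wirtinger, wirtingerBar, coe_lineDerivOp_eq_fderiv]
        congr 1 with z
        ring
    _ = 0 := by
        rw [integral_const_mul, integral_sub (hint _ _) (hint _ _), hcomm, sub_self, mul_zero]

lemma eLpNorm_wirtingerBar_two : eLpNorm (wirtingerBar H) 2 = eLpNorm (wirtinger H) 2 := by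
  let Hbar : 𝓢(ℂ, ℂ) := H.postcompCLM (conjCLE : ℂ →L[ℝ] ℂ)
  have hHbar : ⇑Hbar = fun z => conj (H z) := rfl
  have henergy := integral_wirtingerBar_mul_wirtinger H Hbar
  simp only [hHbar, wirtinger_conj, wirtingerBar_conj, mul_conj, normSq_eq_norm_sq,
    integral_complex_ofReal, ofReal_inj] at henergy
  rw [(memLp_wirtingerBar H 2).eLpNorm_eq_integral_rpow_norm two_ne_zero ENNReal.ofNat_ne_top,
    (memLp_wirtinger H 2).eLpNorm_eq_integral_rpow_norm two_ne_zero ENNReal.ofNat_ne_top]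
  simp [henergy]

end SchwartzWirtinger

section CauchyKernel

/-- A smooth step function, equal to `0` on `(-∞, 1/2]` and to `1` on `[1, ∞)`, from which the
radial mollifier and the truncated Cauchy kernel are built. -/
def smoothStep (t : ℝ) : ℝ := smoothTransition (2 * t - 1)

lemma contDiff_smoothStep : ContDiff ℝ ∞ smoothStep :=
  smoothTransition.contDiff.comp (by fun_prop)

lemma smoothStep_of_le {t : ℝ} (ht : t ≤ 1 / 2) : smoothStep t = 0 :=
  smoothTransition.zero_of_nonpos (by linarith)

lemma smoothStep_of_ge {t : ℝ} (ht : 1 ≤ t) : smoothStep t = 1 :=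
  smoothTransition.one_of_one_le (by linarith)

lemma monotone_smoothStep : Monotone smoothStep :=
  fun _ _ hst => smoothTransition.monotone (by linarith)

lemma contDiff_deriv_smoothStep : ContDiff ℝ ∞ (deriv smoothStep) :=
  (contDiff_infty_iff_deriv.1 contDiff_smoothStep).2

lemma support_deriv_smoothStep_subset : Function.support (deriv smoothStep) ⊆ Icc (1 / 2) 1 := by
  refine fun t ht => ⟨?_, ?_⟩ <;> by_contra! hlt <;> refine ht ?_
  · have : smoothStep =ᶠ[𝓝 t] fun _ => 0 := by
      filter_upwards [Iio_mem_nhds hlt] with s hs using smoothStep_of_le (le_of_lt hs)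
    rw [this.deriv_eq, deriv_const]
  · have : smoothStep =ᶠ[𝓝 t] fun _ => 1 := by
      filter_upwards [Ioi_mem_nhds hlt] with s hs using smoothStep_of_ge (le_of_lt hs)
    rw [this.deriv_eq, deriv_const]

lemma exists_deriv_smoothStep_le : ∃ B : ℝ, ∀ t, deriv smoothStep t ≤ B := by
  have hcompact : HasCompactSupport (deriv smoothStep) :=
    HasCompactSupport.of_support_subset_isCompact isCompact_Icc support_deriv_smoothStep_subset
  obtain ⟨B, hB⟩ :=
    hcompact.exists_bound_of_continuous contDiff_deriv_smoothStep.continuous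
  exact ⟨B, fun t => (le_abs_self _).trans (hB t)⟩

/-- The mass of the unnormalised radial bump `z ↦ smoothStep' (|z|²)`. -/
def bumpMass : ℝ := ∫ z : ℂ, deriv smoothStep (‖z‖ ^ 2)

/-- The radial mollifier of unit mass supported in the closed disc of radius `r`. -/
def radialMollifier (r : ℝ) (z : ℂ) : ℝ :=
  bumpMass⁻¹ * ((r ^ 2)⁻¹ * deriv smoothStep (‖z‖ ^ 2 / r ^ 2))

/-- The Cauchy kernel `1 / z̄`, the fundamental solution of `∂` up to a constant, truncated near
the origin so that its `∂`-derivative becomes `radialMollifier r` instead of a Dirac mass. -/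
def truncatedCauchyKernel (r : ℝ) (z : ℂ) : ℂ :=
  (bumpMass⁻¹ * smoothStep (‖z‖ ^ 2 / r ^ 2) : ℝ) * (conj z)⁻¹

lemma contDiff_radialMollifier (r : ℝ) : ContDiff ℝ ∞ (radialMollifier r) :=
  contDiff_const.mul (contDiff_const.mul
    (contDiff_deriv_smoothStep.comp ((contDiff_norm_sq ℝ).div_const _)))

lemma continuous_bump : Continuous fun z : ℂ => deriv smoothStep (‖z‖ ^ 2) :=
  contDiff_deriv_smoothStep.continuous.comp (by fun_prop)

lemma support_bump_subset :
    Function.support (fun z : ℂ => deriv smoothStep (‖z‖ ^ 2)) ⊆ closedBall 0 1 := by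
  intro z hz
  have := (support_deriv_smoothStep_subset hz).2
  simpa [abs_le_one_iff_mul_self_le_one, ← sq] using this

lemma bumpMass_pos : 0 < bumpMass := by
  obtain ⟨t, ht⟩ : ∃ t, deriv smoothStep t ≠ 0 := by
    by_contra! hzero
    have := is_const_of_deriv_eq_zero (contDiff_smoothStep.differentiable (by simp)) hzero 0 1
    rw [smoothStep_of_le (by norm_num), smoothStep_of_ge le_rfl] at this
    exact zero_ne_one this
  have ht0 : 0 ≤ t := (by norm_num : (0 : ℝ) ≤ 1 / 2).trans (support_deriv_smoothStep_subset ht).1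
  refine continuous_bump.integral_pos_of_hasCompactSupport_nonneg_nonzero (x := (√t : ℂ))
    (.of_support_subset_isCompact (isCompact_closedBall 0 1) support_bump_subset)
    (fun z => monotone_smoothStep.deriv_nonneg) ?_
  simpa [Real.sq_sqrt ht0] using ht

lemma radialMollifier_eq_bump (r : ℝ) (z : ℂ) : radialMollifier r z =
    bumpMass⁻¹ * ((r ^ 2)⁻¹ * deriv smoothStep (‖r⁻¹ • z‖ ^ 2)) := by
  rw [radialMollifier, norm_smul, mul_pow, norm_inv, inv_pow, norm_eq_abs, sq_abs,
    div_eq_inv_mul]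

lemma radialMollifier_nonneg (r : ℝ) (z : ℂ) : 0 ≤ radialMollifier r z :=
  mul_nonneg (inv_nonneg.2 bumpMass_pos.le)
    (mul_nonneg (by positivity) monotone_smoothStep.deriv_nonneg)

lemma support_radialMollifier_subset {r : ℝ} (hr : 0 < r) :
    Function.support (radialMollifier r) ⊆ closedBall 0 r := by
  intro z hz
  rw [Function.mem_support, radialMollifier_eq_bump] at hz
  have := support_bump_subset (right_ne_zero_of_mul (right_ne_zero_of_mul hz))
  rwa [mem_closedBall_zero_iff, norm_smul, norm_inv, norm_of_nonneg hr.le, inv_mul_le_iff₀ hr,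
    mul_one, ← mem_closedBall_zero_iff] at this

lemma integral_radialMollifier {r : ℝ} (hr : 0 < r) : ∫ z, radialMollifier r z = 1 := by
  simp_rw [radialMollifier_eq_bump, integral_const_mul]
  rw [Measure.integral_comp_inv_smul volume (fun z : ℂ => deriv smoothStep (‖z‖ ^ 2)) r,
    finrank_real_complex, abs_of_nonneg (sq_nonneg r), smul_eq_mul,
    inv_mul_cancel_left₀ (by positivity)]
  exact inv_mul_cancel₀ bumpMass_pos.ne'

lemma exists_radialMollifier_le : ∃ B : ℝ, ∀ r z, radialMollifier r z ≤ B / r ^ 2 := by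
  obtain ⟨B, hB⟩ := exists_deriv_smoothStep_le
  have := bumpMass_pos
  refine ⟨bumpMass⁻¹ * B, fun r z => ?_⟩
  rw [radialMollifier, mul_div_assoc, div_eq_inv_mul B]
  gcongr
  exact hB _

lemma truncatedCauchyKernel_eventuallyEq_zero (r : ℝ) :
    truncatedCauchyKernel r =ᶠ[𝓝 0] 0 := by
  have hsmall : ∀ᶠ z : ℂ in 𝓝 0, ‖z‖ ^ 2 / r ^ 2 < 1 / 2 :=
    ContinuousAt.eventually_lt (by fun_prop) (by fun_prop) (by simp)
  filter_upwards [hsmall] with z hz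
  simp [truncatedCauchyKernel, smoothStep_of_le hz.le]

lemma contDiff_truncationProfile (r : ℝ) :
    ContDiff ℝ ∞ fun t => bumpMass⁻¹ * smoothStep (t / r ^ 2) :=
  contDiff_const.mul (contDiff_smoothStep.comp (contDiff_id.div_const _))

lemma contDiff_truncatedCauchyKernel (r : ℝ) :
    ContDiff ℝ ∞ (truncatedCauchyKernel r) := by
  refine contDiff_iff_contDiffAt.2 fun z => ?_
  rcases eq_or_ne z 0 with rfl | hz
  · exact contDiffAt_const.congr_of_eventuallyEq (truncatedCauchyKernel_eventuallyEq_zero r)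
  · refine ContDiffAt.mul ?_ (conjCLE.contDiff.contDiffAt.inv (by simpa using hz))
    exact (contDiff_radial (contDiff_truncationProfile r)).contDiffAt

lemma wirtinger_truncatedCauchyKernel (r : ℝ) (z : ℂ) :
    wirtinger (truncatedCauchyKernel r) z = radialMollifier r z := by
  rcases eq_or_ne z 0 with rfl | hz
  · have hzero : deriv smoothStep 0 = 0 := by
      by_contra hne
      have := (support_deriv_smoothStep_subset hne).1
      norm_num at this
    simp [wirtinger, (truncatedCauchyKernel_eventuallyEq_zero r).fderiv_eq, radialMollifier,
      hzero]
  · have hscale : HasDerivAt (fun t => bumpMass⁻¹ * smoothStep (t / r ^ 2))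
        (bumpMass⁻¹ * (deriv smoothStep (‖z‖ ^ 2 / r ^ 2) * (1 / r ^ 2))) (‖z‖ ^ 2) :=
      ((contDiff_smoothStep.differentiable (by simp) _).hasDerivAt.comp _
        ((hasDerivAt_id _).div_const _)).const_mul _
    have hconj : conj z ≠ 0 := by simpa using hz
    have hkernel : DifferentiableAt ℝ (fun w : ℂ => (conj w)⁻¹) z :=
      conjCLE.differentiableAt.inv hconj
    have hanti : wirtinger (fun w : ℂ => (conj w)⁻¹) z = 0 := by
      simp_rw [← map_inv₀, wirtinger_conj, wirtingerBar_eq_zero (differentiableAt_inv hz),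
        map_zero]
    have hradial : DifferentiableAt ℝ
        (fun w : ℂ => ((bumpMass⁻¹ * smoothStep (‖w‖ ^ 2 / r ^ 2) : ℝ) : ℂ)) z :=
      (contDiff_radial (contDiff_truncationProfile r)).differentiable (by simp) z
    unfold truncatedCauchyKernel
    rw [wirtinger_mul hradial hkernel, hanti, mul_zero, zero_add,
      wirtinger_radial hscale.differentiableAt, hscale.deriv, mul_comm, mul_assoc,
      mul_inv_cancel₀ hconj, mul_one, radialMollifier, one_div, mul_comm (_ ^ 2)⁻¹]

end CauchyKernel

section UnitMassKernel

variable {E A : Type*} [NormedAddCommGroup E] [MeasurableSpace E] [BorelSpace E]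
  {μ : Measure E} [μ.IsAddLeftInvariant] [μ.IsNegInvariant] [NormedRing A]
  [NormedAlgebra ℝ A] {f k : E → A} {p : ℝ}

lemma enorm_convolution_rpow_le (hf : Continuous f) (hk : Continuous k)
    (hmass : ∫⁻ t, ‖k t‖ₑ ∂μ = 1) (hp : 1 ≤ p) (x : E) :
    ‖(f ⋆[ContinuousLinearMap.mul ℝ A, μ] k) x‖ₑ ^ p ≤ ∫⁻ t, ‖k (x - t)‖ₑ * ‖f t‖ₑ ^ p ∂μ := by
  let ν := μ.withDensity fun t => ‖k (x - t)‖ₑ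
  have hkx : Measurable fun t => ‖k (x - t)‖ₑ := by
    exact (hk.comp (continuous_const.sub continuous_id)).enorm.measurable
  have lintegral_ν (g : E → ℝ≥0∞) (hg : Measurable g) :
      ∫⁻ t, g t ∂ν = ∫⁻ t, ‖k (x - t)‖ₑ * g t ∂μ :=
    lintegral_withDensity_eq_lintegral_mul μ hkx hg
  have : IsProbabilityMeasure ν := ⟨by
    rw [withDensity_apply _ .univ, Measure.restrict_univ,
      lintegral_sub_left_eq_self (fun t => ‖k t‖ₑ), hmass]⟩
  have hjensen : eLpNorm (fun t => ‖f t‖ₑ) 1 ν ≤ eLpNorm (fun t => ‖f t‖ₑ) (.ofReal p) ν :=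
    eLpNorm_le_eLpNorm_of_exponent_le (by simpa using hp) hf.enorm.aestronglyMeasurable
  have hp0 : 0 < p := one_pos.trans_le hp
  rw [eLpNorm_eq_lintegral_rpow_enorm_toReal (by simpa using hp0) ENNReal.ofReal_ne_top,
    eLpNorm_one_eq_lintegral_enorm, ENNReal.toReal_ofReal hp0.le, one_div,
    ENNReal.le_rpow_inv_iff hp0] at hjensen
  simp only [enorm_eq_self] at hjensen
  calc ‖(f ⋆[ContinuousLinearMap.mul ℝ A, μ] k) x‖ₑ ^ p
      ≤ (∫⁻ t, ‖k (x - t)‖ₑ * ‖f t‖ₑ ∂μ) ^ p := by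
        gcongr
        refine (enorm_integral_le_lintegral_enorm _).trans (lintegral_mono fun t => ?_)
        change ‖f t * k (x - t)‖ₑ ≤ _
        rw [mul_comm, enorm_eq_nnnorm, enorm_eq_nnnorm, enorm_eq_nnnorm]
        exact_mod_cast nnnorm_mul_le (f t) (k (x - t))
    _ = (∫⁻ t, ‖f t‖ₑ ∂ν) ^ p := by rw [lintegral_ν _ hf.enorm.measurable]
    _ ≤ ∫⁻ t, ‖f t‖ₑ ^ p ∂ν := hjensen
    _ = ∫⁻ t, ‖k (x - t)‖ₑ * ‖f t‖ₑ ^ p ∂μ := lintegral_ν _ (hf.enorm.measurable.pow_const p)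

lemma enorm_convolution_rpow_le_of_support_subset (hf : Continuous f) (hk : Continuous k)
    (hmass : ∫⁻ t, ‖k t‖ₑ ∂μ = 1) (hp : 1 ≤ p) {r : ℝ} {B : ℝ≥0∞}
    (hsupp : Function.support k ⊆ closedBall 0 r) (hB : ∀ t, ‖k t‖ₑ ≤ B) (x : E) :
    ‖(f ⋆[ContinuousLinearMap.mul ℝ A, μ] k) x‖ₑ ^ p ≤
      B * ∫⁻ t in closedBall x r, ‖f t‖ₑ ^ p ∂μ := by
  rw [← lintegral_const_mul _ (hf.enorm.measurable.pow_const p),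
    ← lintegral_indicator measurableSet_closedBall]
  refine (enorm_convolution_rpow_le hf hk hmass hp x).trans (lintegral_mono fun t => ?_)
  by_cases ht : t ∈ closedBall x r
  · rw [indicator_of_mem ht]
    gcongr
    exact hB _
  · have hzero : k (x - t) = 0 := by
      by_contra hne
      exact ht (by simpa [dist_eq_norm, norm_sub_rev] using hsupp hne)
    simp [hzero]

variable [SecondCountableTopology E] [SFinite μ]

lemma eLpNorm_convolution_le (hf : Continuous f) (hk : Continuous k)
    (hmass : ∫⁻ t, ‖k t‖ₑ ∂μ = 1) (hp : 1 ≤ p) :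
    eLpNorm (f ⋆[ContinuousLinearMap.mul ℝ A, μ] k) (.ofReal p) μ ≤ eLpNorm f (.ofReal p) μ := by
  have hp0 : 0 < p := one_pos.trans_le hp
  rw [eLpNorm_eq_lintegral_rpow_enorm_toReal (by simpa using hp0) ENNReal.ofReal_ne_top,
    eLpNorm_eq_lintegral_rpow_enorm_toReal (by simpa using hp0) ENNReal.ofReal_ne_top,
    ENNReal.toReal_ofReal hp0.le]
  refine ENNReal.rpow_le_rpow ?_ (by positivity)
  calc ∫⁻ x, ‖(f ⋆[ContinuousLinearMap.mul ℝ A, μ] k) x‖ₑ ^ p ∂μ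
      ≤ ∫⁻ x, ∫⁻ t, ‖k (x - t)‖ₑ * ‖f t‖ₑ ^ p ∂μ ∂μ :=
        lintegral_mono (enorm_convolution_rpow_le hf hk hmass hp)
    _ = ∫⁻ t, (∫⁻ x, ‖k (x - t)‖ₑ ∂μ) * ‖f t‖ₑ ^ p ∂μ := by
        have hkf : Measurable fun z : E × E => ‖k (z.1 - z.2)‖ₑ * ‖f z.2‖ₑ ^ p :=
          (hk.comp (continuous_fst.sub continuous_snd)).enorm.measurable.mul
            ((hf.comp continuous_snd).enorm.measurable.pow_const p)
        rw [lintegral_lintegral_swap hkf.aemeasurable]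
        exact lintegral_congr fun t => lintegral_mul_const _
          (hk.comp (continuous_id.sub continuous_const)).enorm.measurable
    _ = ∫⁻ t, ‖f t‖ₑ ^ p ∂μ := by
        simp_rw [lintegral_sub_right_eq_self (fun t => ‖k t‖ₑ), hmass, one_mul]

end UnitMassKernel

section ConvolutionDerivative

lemma integrable_mul_comp_sub {G A : Type*} [AddGroup G] [TopologicalSpace G]
    [IsTopologicalAddGroup G] [MeasurableSpace G] [BorelSpace G] {μ : Measure G} [NormedRing A]
    [NormedAlgebra ℝ A] {f k : G → A} (hf : LocallyIntegrable f μ) (hk : Continuous k)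
    (hsupp : HasCompactSupport k) (x : G) : Integrable (fun t => f t * k (x - t)) μ :=
  hsupp.convolutionExists_right (ContinuousLinearMap.mul ℝ A) hf hk x

variable {E A : Type*} [NormedAddCommGroup E] [NormedSpace ℝ E] [MeasurableSpace E] [BorelSpace E]
  {μ : Measure E} [NormedRing A] [NormedAlgebra ℝ A] {f k : E → A}

lemma fderiv_convolution_apply [SFinite μ] [μ.IsAddLeftInvariant] (hf : LocallyIntegrable f μ)
    (hk : ContDiff ℝ 1 k) (hsupp : HasCompactSupport k) (x v : E) :
    fderiv ℝ (f ⋆[ContinuousLinearMap.mul ℝ A, μ] k) x v =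
      ∫ t, f t * fderiv ℝ k (x - t) v ∂μ := by
  rw [(hsupp.hasFDerivAt_convolution_right (ContinuousLinearMap.mul ℝ A) hf hk x).fderiv,
    convolution_precompR_apply (ContinuousLinearMap.mul ℝ A) hf (hsupp.fderiv ℝ)
      (hk.continuous_fderiv one_ne_zero)]
  rfl

lemma integrable_mul_fderiv_comp_sub (hf : LocallyIntegrable f μ) (hk : ContDiff ℝ 1 k)
    (hsupp : HasCompactSupport k) (x v : E) :
    Integrable (fun t => f t * fderiv ℝ k (x - t) v) μ :=
  integrable_mul_comp_sub hf ((hk.continuous_fderiv one_ne_zero).clm_apply continuous_const)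
    (hsupp.fderiv_apply ℝ v) x

end ConvolutionDerivative

section WirtingerConvolution

variable {f k : ℂ → ℂ}

lemma wirtinger_convolution (hf : LocallyIntegrable f) (hk : ContDiff ℝ 1 k)
    (hsupp : HasCompactSupport k) :
    wirtinger (f ⋆[ContinuousLinearMap.mul ℝ ℂ] k) =
      f ⋆[ContinuousLinearMap.mul ℝ ℂ] wirtinger k := by
  ext x
  have hint := integrable_mul_fderiv_comp_sub hf hk hsupp x
  rw [wirtinger, fderiv_convolution_apply hf hk hsupp, fderiv_convolution_apply hf hk hsupp,
    ← integral_const_mul, ← integral_sub (hint 1) ((hint I).const_mul I), ← integral_div]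
  refine integral_congr_ae (.of_forall fun t => ?_)
  simp only [wirtinger, ContinuousLinearMap.mul_apply']
  ring

lemma wirtingerBar_convolution (hf : LocallyIntegrable f) (hk : ContDiff ℝ 1 k)
    (hsupp : HasCompactSupport k) :
    wirtingerBar (f ⋆[ContinuousLinearMap.mul ℝ ℂ] k) =
      f ⋆[ContinuousLinearMap.mul ℝ ℂ] wirtingerBar k := by
  ext x
  have hint := integrable_mul_fderiv_comp_sub hf hk hsupp x
  rw [wirtingerBar, fderiv_convolution_apply hf hk hsupp, fderiv_convolution_apply hf hk hsupp,
    ← integral_const_mul, ← integral_add (hint 1) ((hint I).const_mul I), ← integral_div]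
  refine integral_congr_ae (.of_forall fun t => ?_)
  simp only [wirtingerBar, ContinuousLinearMap.mul_apply']
  ring

lemma wirtingerBar_convolution_wirtinger (H : 𝓢(ℂ, ℂ)) (hk : ContDiff ℝ ∞ k)
    (hsupp : HasCompactSupport k) :
    wirtingerBar H ⋆[ContinuousLinearMap.mul ℝ ℂ] wirtinger k =
      wirtinger H ⋆[ContinuousLinearMap.mul ℝ ℂ] wirtingerBar k := by
  ext x
  have hdiff (z : ℂ) : DifferentiableAt ℝ k z := hk.differentiable (by simp) z
  let K : 𝓢(ℂ, ℂ) := HasCompactSupport.toSchwartzMap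
    (hsupp.comp_homeomorph (Homeomorph.subLeft x)) (hk.comp (contDiff_const.sub contDiff_id))
  have hK : ⇑K = fun t => k (x - t) := rfl
  have hdual := integral_wirtingerBar_mul_wirtinger H K
  simp only [hK, wirtinger_comp_const_sub (hdiff _), wirtingerBar_comp_const_sub (hdiff _),
    mul_neg, integral_neg, neg_inj] at hdual
  exact hdual

lemma eLpNorm_convolution_wirtingerBar (hf : Continuous f) (hfsupp : HasCompactSupport f)
    (hk : ContDiff ℝ ∞ k) (hsupp : HasCompactSupport k) :
    eLpNorm (f ⋆[ContinuousLinearMap.mul ℝ ℂ] wirtingerBar k) 2 =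
      eLpNorm (f ⋆[ContinuousLinearMap.mul ℝ ℂ] wirtinger k) 2 := by
  have hloc := hf.locallyIntegrable (μ := volume)
  have hk1 : ContDiff ℝ 1 k := hk.of_le (by simp)
  rw [← wirtinger_convolution hloc hk1 hsupp, ← wirtingerBar_convolution hloc hk1 hsupp]
  exact eLpNorm_wirtingerBar_two (HasCompactSupport.toSchwartzMap
    (hfsupp.convolution (ContinuousLinearMap.mul ℝ ℂ) hsupp)
    (hsupp.contDiff_convolution_right (n := ⊤) _ hloc hk))

end WirtingerConvolution

section Mollification

/-- The average of `f` at scale `r`, that is its convolution with `radialMollifier r`. -/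
def mollify (r : ℝ) (f : ℂ → ℂ) : ℂ → ℂ :=
  f ⋆[ContinuousLinearMap.mul ℝ ℂ] fun z => (radialMollifier r z : ℂ)

/-- The difference of the Cauchy kernels truncated at radii `δ` and `r`: a smooth kernel supported
between these radii, whose `∂`-derivative is `radialMollifier δ - radialMollifier r`. -/
def annularKernel (δ r : ℝ) (z : ℂ) : ℂ := truncatedCauchyKernel δ z - truncatedCauchyKernel r z

variable {f : ℂ → ℂ} {δ r : ℝ}

lemma continuous_ofReal_radialMollifier (r : ℝ) :
    Continuous fun z => (radialMollifier r z : ℂ) :=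
  continuous_ofReal.comp (contDiff_radialMollifier r).continuous

lemma support_ofReal_radialMollifier_subset (hr : 0 < r) :
    Function.support (fun z => (radialMollifier r z : ℂ)) ⊆ closedBall 0 r :=
  fun z hz => support_radialMollifier_subset hr (by simpa using hz)

lemma lintegral_enorm_radialMollifier (hr : 0 < r) : ∫⁻ z, ‖(radialMollifier r z : ℂ)‖ₑ = 1 := by
  have hint : Integrable (radialMollifier r) :=
    (contDiff_radialMollifier r).continuous.integrable_of_hasCompactSupport
      (.of_support_subset_isCompact (isCompact_closedBall 0 r) (support_radialMollifier_subset hr))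
  rw [← ENNReal.ofReal_one, ← integral_radialMollifier hr,
    ofReal_integral_eq_lintegral_ofReal hint (.of_forall (radialMollifier_nonneg r))]
  refine lintegral_congr fun z => ?_
  rw [← ofReal_norm, norm_real, norm_of_nonneg (radialMollifier_nonneg r z)]

lemma continuous_mollify (hf : Continuous f) (hr : 0 < r) : Continuous (mollify r f) :=
  HasCompactSupport.continuous_convolution_right _
    (.of_support_subset_isCompact (isCompact_closedBall 0 r)
      (support_ofReal_radialMollifier_subset hr))
    hf.locallyIntegrable (continuous_ofReal_radialMollifier r)

lemma eLpNorm_mollify_two_le (hf : Continuous f) (hr : 0 < r) :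
    eLpNorm (mollify r f) 2 ≤ eLpNorm f 2 := by
  simpa [mollify] using eLpNorm_convolution_le hf (continuous_ofReal_radialMollifier r)
    (lintegral_enorm_radialMollifier hr) one_le_two

lemma exists_enorm_mollify_sq_le : ∃ B : ℝ≥0, ∀ (f : ℂ → ℂ) (r : ℝ) (x : ℂ), Continuous f → 0 < r →
    ‖mollify r f x‖ₑ ^ 2 ≤ B / .ofReal (r ^ 2) * ∫⁻ z in closedBall x r, ‖f z‖ₑ ^ 2 := by
  obtain ⟨B, hB⟩ := exists_radialMollifier_le
  refine ⟨B.toNNReal, fun f r x hf hr => ?_⟩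
  have hbound (z : ℂ) : ‖(radialMollifier r z : ℂ)‖ₑ ≤ B.toNNReal / .ofReal (r ^ 2) := by
    rw [← ofReal_norm, norm_real, norm_of_nonneg (radialMollifier_nonneg r z),
      ENNReal.ofNNReal_toNNReal, ← ENNReal.ofReal_div_of_pos (by positivity)]
    exact ENNReal.ofReal_le_ofReal (hB r z)
  exact_mod_cast enorm_convolution_rpow_le_of_support_subset hf
    (continuous_ofReal_radialMollifier r) (lintegral_enorm_radialMollifier hr) one_le_two
    (support_ofReal_radialMollifier_subset hr) hbound x

lemma tendsto_mollify {ι : Type*} {l : Filter ι} {δ : ι → ℝ} (hδ0 : ∀ i, 0 < δ i)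
    (hδ : Tendsto δ l (𝓝 0)) (hf : Continuous f) (x : ℂ) :
    Tendsto (fun i => mollify (δ i) f x) l (𝓝 (f x)) := by
  have hflip (r : ℝ) : mollify r f =
      radialMollifier r ⋆[ContinuousLinearMap.lsmul ℝ ℝ] f := by
    rw [mollify, ← convolution_flip]
    ext x
    refine integral_congr_ae (.of_forall fun t => ?_)
    simp
  simp_rw [hflip]
  refine convolution_tendsto_right (.of_forall fun i => radialMollifier_nonneg (δ i))
    (.of_forall fun i => integral_radialMollifier (hδ0 i)) ?_
    (.of_forall fun _ => hf.aestronglyMeasurable) ((hf.tendsto x).comp tendsto_snd)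
    tendsto_const_nhds
  refine tendsto_smallSets_iff.2 fun s hs => ?_
  obtain ⟨ε, hε, hball⟩ := nhds_basis_closedBall.mem_iff.1 hs
  filter_upwards [hδ.eventually_le_const hε] with i hi
  exact (support_radialMollifier_subset (hδ0 i)).trans
    ((closedBall_subset_closedBall hi).trans hball)

lemma contDiff_annularKernel (δ r : ℝ) : ContDiff ℝ ∞ (annularKernel δ r) :=
  (contDiff_truncatedCauchyKernel δ).sub (contDiff_truncatedCauchyKernel r)

lemma tsupport_annularKernel_subset (hδ : 0 < δ) (hδr : δ ≤ r) :
    tsupport (annularKernel δ r) ⊆ closedBall 0 r := by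
  refine closure_minimal (fun z hz => ?_) isClosed_closedBall
  by_contra hfar
  have hlt : r < ‖z‖ := by simpa using hfar
  have hr : 0 < r := hδ.trans_le hδr
  have hstep {s : ℝ} (hs : 0 < s) (hsr : s ≤ r) : smoothStep (‖z‖ ^ 2 / s ^ 2) = 1 :=
    smoothStep_of_ge ((one_le_div (by positivity)).2 (by gcongr; linarith))
  exact hz (by simp [annularKernel, truncatedCauchyKernel, hstep hδ hδr, hstep hr le_rfl])

lemma hasCompactSupport_annularKernel (hδ : 0 < δ) (hδr : δ ≤ r) :
    HasCompactSupport (annularKernel δ r) :=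
  (isCompact_closedBall 0 r).of_isClosed_subset (isClosed_tsupport _)
    (tsupport_annularKernel_subset hδ hδr)

lemma wirtinger_annularKernel (δ r : ℝ) : wirtinger (annularKernel δ r) =
    fun z => (radialMollifier δ z : ℂ) - radialMollifier r z := by
  ext z
  have hdiff (s : ℝ) := (contDiff_truncatedCauchyKernel s).differentiable (by simp) z
  unfold annularKernel
  rw [wirtinger_sub (hdiff δ) (hdiff r), wirtinger_truncatedCauchyKernel,
    wirtinger_truncatedCauchyKernel]

lemma convolution_wirtinger_annularKernel (hf : Continuous f) (hδ : 0 < δ) (hr : 0 < r) :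
    f ⋆[ContinuousLinearMap.mul ℝ ℂ] wirtinger (annularKernel δ r) =
      mollify δ f - mollify r f := by
  ext x
  have hint {s : ℝ} (hs : 0 < s) : Integrable fun t => f t * (radialMollifier s (x - t) : ℂ) :=
    integrable_mul_comp_sub hf.locallyIntegrable (continuous_ofReal_radialMollifier s)
      (.of_support_subset_isCompact (isCompact_closedBall 0 s)
        (support_ofReal_radialMollifier_subset hs)) x
  simp only [wirtinger_annularKernel, convolution_def, ContinuousLinearMap.mul_apply', mul_sub]
  exact integral_sub (hint hδ) (hint hr)

lemma wirtinger_convolution_wirtingerBar_annularKernel (H : 𝓢(ℂ, ℂ)) (hδ : 0 < δ) (hδr : δ ≤ r) :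
    wirtinger H ⋆[ContinuousLinearMap.mul ℝ ℂ] wirtingerBar (annularKernel δ r) =
      mollify δ (wirtingerBar H) - mollify r (wirtingerBar H) := by
  rw [← wirtingerBar_convolution_wirtinger H (contDiff_annularKernel δ r)
      (hasCompactSupport_annularKernel hδ hδr),
    convolution_wirtinger_annularKernel (continuous_wirtingerBar (H.smooth 1)) hδ
      (hδ.trans_le hδr)]

end Mollification

section Localization

lemma convolution_eq_of_eqOn_closedBall {𝕜 G E E' F : Type*} [NontriviallyNormedField 𝕜]
    [SeminormedAddCommGroup G] [MeasurableSpace G] {μ : Measure G} [NormedAddCommGroup E]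
    [NormedSpace 𝕜 E] [NormedAddCommGroup E'] [NormedSpace 𝕜 E'] [NormedAddCommGroup F]
    [NormedSpace 𝕜 F] [NormedSpace ℝ F] (L : E →L[𝕜] E' →L[𝕜] F) {f g : G → E} {k : G → E'}
    {r : ℝ} {z : G} (hk : Function.support k ⊆ closedBall 0 r) (hfg : EqOn f g (closedBall z r)) :
    (f ⋆[L, μ] k) z = (g ⋆[L, μ] k) z := by
  refine integral_congr_ae (.of_forall fun t => ?_)
  by_cases ht : z - t ∈ closedBall (0 : G) r
  · have htz : t ∈ closedBall z r := by simpa [mem_closedBall, dist_eq_norm, norm_sub_rev] using ht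
    simp [hfg htz]
  · simp [Function.notMem_support.1 fun h => ht (hk h)]

lemma exists_cutoff_mul {E F : Type*} [NormedAddCommGroup E] [NormedSpace ℝ E]
    [FiniteDimensional ℝ E] [MeasurableSpace E] [BorelSpace E] (μ : Measure E)
    [NormedAddCommGroup F] [NormedSpace ℝ F] (p : ℝ≥0∞) {f : E → F} (hf : Continuous f) (x : E)
    {R S : ℝ} (hR : 0 < R) (hRS : R < S) :
    ∃ g : E → F, Continuous g ∧ HasCompactSupport g ∧ EqOn f g (closedBall x R) ∧
      eLpNorm g p μ ≤ eLpNorm f p (μ.restrict (closedBall x S)) := by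
  let χ : ContDiffBump x := ⟨R, S, hR, hRS⟩
  have hχsupp {z : E} (hz : z ∉ closedBall x S) : χ z = 0 :=
    χ.zero_of_le_dist (not_le.1 (by simpa using hz)).le
  refine ⟨fun z => χ z • f z, χ.continuous.smul hf,
    .of_support_subset_isCompact (isCompact_closedBall x S) fun z hz => ?_, fun z hz => ?_, ?_⟩
  · by_contra hfar
    exact hz (by simp [hχsupp hfar])
  · simp [χ.one_of_mem_closedBall hz]
  · rw [← eLpNorm_indicator_eq_eLpNorm_restrict measurableSet_closedBall]
    refine eLpNorm_mono fun z => ?_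
    by_cases hz : z ∈ closedBall x S
    · rw [indicator_of_mem hz, norm_smul, norm_of_nonneg χ.nonneg]
      exact mul_le_of_le_one_left (norm_nonneg _) χ.le_one
    · simp [hχsupp hz]

end Localization

section LocalEstimate

variable {f : ℂ → ℂ} {δ r : ℝ}

lemma support_wirtingerBar_subset (f : ℂ → ℂ) : Function.support (wirtingerBar f) ⊆ tsupport f := by
  intro z hz
  refine support_fderiv_subset ℝ (fun hzero => hz ?_)
  simp [wirtingerBar, hzero]

lemma eLpNorm_convolution_annularKernel_two_le (hf : Continuous f) (hfsupp : HasCompactSupport f)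
    (hδ : 0 < δ) (hδr : δ ≤ r) :
    eLpNorm (f ⋆[ContinuousLinearMap.mul ℝ ℂ] wirtingerBar (annularKernel δ r)) 2 ≤
      2 * eLpNorm f 2 := by
  have hr := hδ.trans_le hδr
  rw [eLpNorm_convolution_wirtingerBar hf hfsupp (contDiff_annularKernel δ r)
    (hasCompactSupport_annularKernel hδ hδr), convolution_wirtinger_annularKernel hf hδ hr, two_mul]
  exact (eLpNorm_sub_le (continuous_mollify hf hδ).aestronglyMeasurable
    (continuous_mollify hf hr).aestronglyMeasurable one_le_two).trans
    (add_le_add (eLpNorm_mollify_two_le hf hδ) (eLpNorm_mollify_two_le hf hr))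

lemma eLpNorm_convolution_annularKernel_restrict_le (hf : Continuous f) (hδ : 0 < δ) (hδr : δ ≤ r)
    (x : ℂ) {R S : ℝ} (hR : 0 ≤ R) (hRS : R + r < S) :
    eLpNorm (f ⋆[ContinuousLinearMap.mul ℝ ℂ] wirtingerBar (annularKernel δ r)) 2
        (volume.restrict (closedBall x R)) ≤
      2 * eLpNorm f 2 (volume.restrict (closedBall x S)) := by
  obtain ⟨g, hg, hgsupp, hfg, hgf⟩ :=
    exists_cutoff_mul volume 2 hf x (add_pos_of_nonneg_of_pos hR (hδ.trans_le hδr)) hRS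
  set k := wirtingerBar (annularKernel δ r)
  have hlocal : ∀ z ∈ closedBall x R,
      (f ⋆[ContinuousLinearMap.mul ℝ ℂ] k) z = (g ⋆[ContinuousLinearMap.mul ℝ ℂ] k) z :=
    fun z hz => convolution_eq_of_eqOn_closedBall _
      ((support_wirtingerBar_subset _).trans (tsupport_annularKernel_subset hδ hδr))
      (hfg.mono (closedBall_subset_closedBall' (by linarith [mem_closedBall.1 hz])))
  rw [eLpNorm_congr_ae ((ae_restrict_iff' measurableSet_closedBall).2 (.of_forall hlocal))]
  exact (eLpNorm_restrict_le _ _ _ _).trans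
    ((eLpNorm_convolution_annularKernel_two_le hg hgsupp hδ hδr).trans (mul_le_mul_right hgf 2))

lemma eLpNorm_wirtingerBar_sub_mollify_le (H : 𝓢(ℂ, ℂ)) (x : ℂ) (hr : 0 < r) {R S : ℝ} (hR : 0 ≤ R)
    (hRS : R + r < S) :
    eLpNorm (wirtingerBar H - mollify r (wirtingerBar H)) 2 (volume.restrict (closedBall x R)) ≤
      2 * eLpNorm (wirtinger H) 2 (volume.restrict (closedBall x S)) := by
  have hbar := continuous_wirtingerBar (H.smooth 1)
  let δ (n : ℕ) : ℝ := r * (1 / ((n : ℝ) + 1))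
  have hδ0 (n : ℕ) : 0 < δ n := by positivity
  have hδr (n : ℕ) : δ n ≤ r :=
    mul_le_of_le_one_right hr.le (div_le_one_of_le₀ (by simp) (by positivity))
  have hδ : Tendsto δ atTop (𝓝 0) := by
    simpa only [mul_zero] using tendsto_one_div_add_atTop_nhds_zero_nat.const_mul r
  refine (Lp.eLpNorm_lim_le_liminf_eLpNorm
    (f := fun n => mollify (δ n) (wirtingerBar H) - mollify r (wirtingerBar H))
    (fun n => ((continuous_mollify hbar (hδ0 n)).sub
      (continuous_mollify hbar hr)).aestronglyMeasurable) _
    (.of_forall fun z => (tendsto_mollify hδ0 hδ hbar z).sub_const _)).trans ?_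
  refine liminf_le_of_le (by isBoundedDefault) fun b hb => ?_
  obtain ⟨n, hn⟩ := hb.exists
  rw [← wirtinger_convolution_wirtingerBar_annularKernel H (hδ0 n) (hδr n)] at hn
  exact hn.trans (eLpNorm_convolution_annularKernel_restrict_le
    (continuous_wirtinger (H.smooth 1)) (hδ0 n) (hδr n) x hR hRS)

end LocalEstimate

section StoppingRadius

lemma exists_mem_Ioc_le_and_lt_mul {α : Type*} [LinearOrder α] {φ ψ : ℝ → α} {K R : ℝ} (hK : 1 < K)
    (hR : 0 < R) (hsmall : ∀ᶠ r in 𝓝[>] 0, φ r ≤ ψ r) (hlarge : ψ R < φ R) :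
    ∃ r ∈ Ioc 0 R, φ r ≤ ψ r ∧ ψ (K * r) < φ (K * r) := by
  have : 0 < K := one_pos.trans hK
  have hscale : Tendsto (fun n : ℕ => R / K ^ n) atTop (𝓝[>] 0) :=
    tendsto_nhdsWithin_iff.2 ⟨(tendsto_pow_atTop_atTop_of_one_lt hK).const_div_atTop R,
      .of_forall fun n => mem_Ioi.2 (by positivity)⟩
  have hex : ∃ n : ℕ, φ (R / K ^ n) ≤ ψ (R / K ^ n) := (hscale.eventually hsmall).exists
  classical
  obtain ⟨m, hm⟩ : ∃ m, Nat.find hex = m + 1 := Nat.exists_eq_succ_of_ne_zero fun h0 => by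
    have := Nat.find_spec hex
    simp only [h0, pow_zero, div_one] at this
    exact this.not_gt hlarge
  refine ⟨R / K ^ (m + 1), ⟨by positivity, div_le_self hR.le (one_le_pow₀ hK.le)⟩,
    hm ▸ Nat.find_spec hex, ?_⟩
  rw [show K * (R / K ^ (m + 1)) = R / K ^ m by field_simp; ring]
  exact not_le.1 (Nat.find_min hex (by lia))

lemma eventually_mul_measure_closedBall_le {X : Type*} [PseudoMetricSpace X] [MeasurableSpace X]
    [OpensMeasurableSpace X] (μ : Measure X) {f : X → ℝ≥0∞} {x : X} {t : ℝ≥0∞}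
    (hf : ContinuousAt f x) (ht : t < f x) :
    ∀ᶠ r in 𝓝[>] 0, t * μ (closedBall x r) ≤ ∫⁻ y in closedBall x r, f y ∂μ := by
  obtain ⟨ε, hε, hball⟩ := nhds_basis_closedBall.mem_iff.1 (hf.eventually_const_lt ht)
  filter_upwards [Ioc_mem_nhdsGT hε] with r hr
  rw [← setLIntegral_const]
  exact setLIntegral_mono' measurableSet_closedBall fun y hy =>
    (hball (closedBall_subset_closedBall hr.2 hy)).le

lemma exists_forall_lt_mul_measure_closedBall {E : Type*} [NormedAddCommGroup E] [NormedSpace ℝ E]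
    [FiniteDimensional ℝ E] [Nontrivial E] [MeasurableSpace E] [BorelSpace E] (μ : Measure E)
    [μ.IsAddHaarMeasure] {c t : ℝ≥0∞} (hc : c ≠ ⊤) (ht : t ≠ 0) :
    ∃ R, 0 < R ∧ ∀ x, c < t * μ (closedBall x R) := by
  have hball : μ (ball 0 1) ≠ 0 := (measure_ball_pos μ 0 one_pos).ne'
  have hpow : Tendsto (fun R : ℝ => t * (ENNReal.ofReal (R ^ Module.finrank ℝ E) * μ (ball 0 1)))
      atTop (𝓝 ⊤) := by
    have hofReal : Tendsto (fun R : ℝ => ENNReal.ofReal (R ^ Module.finrank ℝ E)) atTop (𝓝 ⊤) :=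
      ENNReal.tendsto_ofReal_atTop.comp (tendsto_pow_atTop Module.finrank_pos.ne')
    have hmul := ENNReal.Tendsto.const_mul (a := t)
      (ENNReal.Tendsto.mul_const (b := μ (ball 0 1)) hofReal (.inl ENNReal.top_ne_zero))
      (.inl (by simp [hball]))
    simpa [ENNReal.top_mul hball, ENNReal.mul_top ht] using hmul
  obtain ⟨R, hlt, hR⟩ := ((hpow.eventually_const_lt hc.lt_top).and (eventually_gt_atTop 0)).exists
  exact ⟨R, hR, fun x => by rwa [Measure.addHaar_closedBall μ x hR.le]⟩

end StoppingRadius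

section GoodLambda

lemma measure_le_of_forall_closedBall_le {X : Type*} [PseudoMetricSpace X]
    [SecondCountableTopology X] [MeasurableSpace X] [OpensMeasurableSpace X] {ν θ : Measure X}
    {T : Set X} {R : ℝ} (h : ∀ x ∈ T, ∃ r ∈ Ioc 0 R,
      ν (closedBall x (5 * r) ∩ T) ≤ θ (closedBall x r)) : ν T ≤ θ univ := by
  choose! r hr hle using h
  obtain ⟨u, huT, hdisj, hcover⟩ := Vitali.exists_disjoint_subfamily_covering_enlargement_closedBall
    T id r R (fun x hx => (hr x hx).2) 5 (by norm_num)
  have hcount : u.Countable := hdisj.countable_of_nonempty_interior fun x hx =>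
    ⟨x, ball_subset_interior_closedBall (mem_ball_self (hr x (huT hx)).1)⟩
  have hsub : T ⊆ ⋃ x ∈ u, closedBall x (5 * r x) ∩ T := fun y hy => by
    obtain ⟨x, hx, hyx⟩ := hcover y hy
    exact mem_biUnion hx ⟨hyx (mem_closedBall_self (hr y hy).1.le), hy⟩
  calc ν T ≤ ν (⋃ x ∈ u, closedBall x (5 * r x) ∩ T) := measure_mono hsub
    _ ≤ ∑' x : u, ν (closedBall x (5 * r x) ∩ T) := measure_biUnion_le ν hcount _
    _ ≤ ∑' x : u, θ (closedBall (x : X) (r x)) := ENNReal.tsum_le_tsum fun x => hle x (huT x.2)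
    _ = θ (⋃ x ∈ u, closedBall x (r x)) :=
      (measure_biUnion hcount hdisj fun _ _ => measurableSet_closedBall).symm
    _ ≤ θ univ := measure_mono (subset_univ _)

section MeasureSpace

variable {X : Type*} [MeasurableSpace X] {μ ν : Measure X}

lemma setLIntegral_le_two_mul {h : X → ℝ≥0∞} (hh : Measurable h) {s : Set X}
    (hs : MeasurableSet s) (hfin : ∫⁻ x in s, h x ∂μ ≠ ⊤) {t : ℝ≥0∞}
    (ht : t * μ s ≤ ∫⁻ x in s, h x ∂μ) :
    ∫⁻ x in s, h x ∂μ ≤ 2 * ∫⁻ x in s ∩ {x | t < 2 * h x}, h x ∂μ := by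
  have hlevel : MeasurableSet {x | t < 2 * h x} := measurableSet_lt (by fun_prop) (by fun_prop)
  have hlow : 2 * ∫⁻ x in s \ {x | t < 2 * h x}, h x ∂μ ≤ ∫⁻ x in s, h x ∂μ := calc
    2 * ∫⁻ x in s \ {x | t < 2 * h x}, h x ∂μ = ∫⁻ x in s \ {x | t < 2 * h x}, 2 * h x ∂μ :=
      (lintegral_const_mul _ hh).symm
    _ ≤ ∫⁻ _ in s \ {x | t < 2 * h x}, t ∂μ :=
      setLIntegral_mono' (hs.diff hlevel) fun x hx => not_lt.1 hx.2
    _ ≤ t * μ s := by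
      rw [setLIntegral_const]
      gcongr
      exact sdiff_subset
    _ ≤ ∫⁻ x in s, h x ∂μ := ht
  have hsplit := lintegral_inter_add_sdiff h s hlevel (μ := μ)
  refine ENNReal.le_of_add_le_add_left hfin ?_
  calc ∫⁻ x in s, h x ∂μ + ∫⁻ x in s, h x ∂μ
      = 2 * ∫⁻ x in s ∩ {x | t < 2 * h x}, h x ∂μ + 2 * ∫⁻ x in s \ {x | t < 2 * h x}, h x ∂μ := by
        rw [← mul_add, hsplit, two_mul]
    _ ≤ ∫⁻ x in s, h x ∂μ + 2 * ∫⁻ x in s ∩ {x | t < 2 * h x}, h x ∂μ := by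
        rw [add_comm]
        gcongr

lemma lintegral_rpow_le_of_measure_lt_le {φ ψ : X → ℝ≥0} (hφ : Measurable φ) (hψ : Measurable ψ)
    (h : ∀ t : ℝ≥0, 0 < t → ν {x | t < φ x} ≤ μ {x | t < ψ x}) {s : ℝ} (hs : 0 < s) :
    ∫⁻ x, (φ x : ℝ≥0∞) ^ s ∂ν ≤ ∫⁻ x, (ψ x : ℝ≥0∞) ^ s ∂μ := by
  have hcake (κ : Measure X) {χ : X → ℝ≥0} (hχ : Measurable χ) : ∫⁻ x, (χ x : ℝ≥0∞) ^ s ∂κ =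
      .ofReal s * ∫⁻ t in Ioi 0, κ {x | t < (χ x : ℝ)} * .ofReal (t ^ (s - 1)) := by
    refine Eq.trans (lintegral_congr fun x => ?_)
      (lintegral_rpow_eq_lintegral_meas_lt_mul κ (f := fun x => (χ x : ℝ))
        (.of_forall fun x => (χ x).coe_nonneg) hχ.coe_nnreal_real.aemeasurable hs)
    rw [← ENNReal.ofReal_rpow_of_nonneg (χ x).coe_nonneg hs.le, ENNReal.ofReal_coe_nnreal]
  rw [hcake ν hφ, hcake μ hψ]
  refine mul_le_mul_right (setLIntegral_mono' measurableSet_Ioi fun t ht => ?_) _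
  lift t to ℝ≥0 using ht.le
  exact mul_le_mul_left (mod_cast h t (mod_cast ht)) _

lemma lintegral_mul_rpow_withDensity {f : X → ℝ≥0} (hf : Measurable f) (a : ℝ≥0) {s : ℝ}
    (hs : 0 ≤ s) : ∫⁻ x, (↑(a * f x) : ℝ≥0∞) ^ s ∂μ.withDensity (fun x => f x) =
      a ^ s * ∫⁻ x, (f x : ℝ≥0∞) ^ (s + 1) ∂μ := by
  rw [lintegral_withDensity_eq_lintegral_mul _ (by fun_prop) (by fun_prop),
    ← lintegral_const_mul _ (by fun_prop)]
  refine lintegral_congr fun x => ?_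
  rw [Pi.mul_apply, ENNReal.coe_mul, ENNReal.mul_rpow_of_nonneg _ _ hs,
    ENNReal.rpow_add_of_nonneg _ _ hs zero_le_one, ENNReal.rpow_one]
  ring

lemma lintegral_add_mul_rpow_le {f g : X → ℝ≥0} (hf : Measurable f) (hg : Measurable g) (a : ℝ≥0)
    {s : ℝ} (hs : 0 ≤ s) : ∫⁻ x, (↑(f x + a * g x) : ℝ≥0∞) ^ (s + 1) ∂μ ≤
      2 ^ s * (∫⁻ x, (f x : ℝ≥0∞) ^ (s + 1) ∂μ +
        a ^ (s + 1) * ∫⁻ x, (g x : ℝ≥0∞) ^ (s + 1) ∂μ) := by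
  rw [← lintegral_const_mul _ (by fun_prop), ← lintegral_add_left (by fun_prop),
    ← lintegral_const_mul _ (by fun_prop)]
  refine lintegral_mono fun x => ?_
  have := ENNReal.rpow_add_le_mul_rpow_add_rpow (f x) (a * g x) (p := s + 1) (by linarith)
  rwa [add_sub_cancel_right, ENNReal.mul_rpow_of_nonneg _ _ (by positivity)] at this

end MeasureSpace

variable {E : Type*} [NormedAddCommGroup E] [MeasurableSpace E]

/-- A reverse-Hölder substitute: on every ball where the average of `f` is at most `t`, the part of
the mass of `f` at heights above `N * t` is controlled by the mass of `g`. The radii `5 * r` and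
`7 * r` leave room for the Vitali covering lemma and for a cutoff, respectively. -/
def HasGoodBallEstimate (μ : Measure E) (f g : E → ℝ≥0) (N A : ℝ≥0) : Prop :=
  ∀ (x : E) (r : ℝ) (t : ℝ≥0), 0 < r →
    ∫⁻ y in closedBall x (7 * r), f y ∂μ ≤ t * μ (closedBall x (7 * r)) →
    ∫⁻ y in closedBall x (5 * r) ∩ {y | N * t < f y}, f y ∂μ ≤
      A * ∫⁻ y in closedBall x (7 * r), g y ∂μ

variable [NormedSpace ℝ E] [FiniteDimensional ℝ E] [BorelSpace E] {μ : Measure E}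
  [μ.IsAddHaarMeasure] {f g : E → ℝ≥0} {N A : ℝ≥0}

lemma HasGoodBallEstimate.mul_setLIntegral_le (h : HasGoodBallEstimate μ f g N A) (M : ℝ≥0) {x : E}
    {r : ℝ} (hr : 0 < r) {t : ℝ≥0} (hf : Continuous f) (hg : Measurable g)
    (hfin : ∫⁻ y, ↑(f y + M * g y) ∂μ ≠ ⊤)
    (hlow : t * μ (closedBall x r) ≤ ∫⁻ y in closedBall x r, ↑(f y + M * g y) ∂μ)
    (hhigh : ∫⁻ y in closedBall x (7 * r), ↑(f y + M * g y) ∂μ ≤ t * μ (closedBall x (7 * r))) :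
    M * ∫⁻ y in closedBall x (5 * r) ∩ {y | N * t < f y}, f y ∂μ ≤
      2 * 7 ^ Module.finrank ℝ E * A *
        ∫⁻ y in closedBall x r ∩ {y | (t : ℝ≥0∞) < 2 * ↑(f y + M * g y)}, ↑(f y + M * g y) ∂μ := by
  have hmono {φ : E → ℝ≥0∞} (hφ : ∀ y, φ y ≤ ↑(f y + M * g y)) :
      ∫⁻ y in closedBall x (7 * r), φ y ∂μ ≤ t * μ (closedBall x (7 * r)) :=
    (lintegral_mono hφ).trans hhigh
  have hscale : μ (closedBall x (7 * r)) = 7 ^ Module.finrank ℝ E * μ (closedBall x r) := by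
    rw [Measure.addHaar_closedBall_mul μ x (by norm_num) hr.le,
      ← Measure.addHaar_closedBall_center μ x, ENNReal.ofReal_pow (by norm_num),
      ENNReal.ofReal_ofNat]
  calc M * ∫⁻ y in closedBall x (5 * r) ∩ {y | N * t < f y}, f y ∂μ
      ≤ M * (A * ∫⁻ y in closedBall x (7 * r), g y ∂μ) := by
        gcongr
        exact h x r t hr (hmono fun y => by simp)
    _ = A * ∫⁻ y in closedBall x (7 * r), M * g y ∂μ := by
        rw [lintegral_const_mul _ (by fun_prop)]
        ring
    _ ≤ A * (t * μ (closedBall x (7 * r))) := by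
        gcongr
        exact hmono fun y => by simp
    _ = 7 ^ Module.finrank ℝ E * A * (t * μ (closedBall x r)) := by
        rw [hscale]
        ring
    _ ≤ 7 ^ Module.finrank ℝ E * A * ∫⁻ y in closedBall x r, ↑(f y + M * g y) ∂μ := by gcongr
    _ ≤ 7 ^ Module.finrank ℝ E * A *
        (2 * ∫⁻ y in closedBall x r ∩ {y | (t : ℝ≥0∞) < 2 * ↑(f y + M * g y)},
          ↑(f y + M * g y) ∂μ) := by
        gcongr
        exact setLIntegral_le_two_mul (by fun_prop) measurableSet_closedBall
          (ne_top_of_le_ne_top hfin (setLIntegral_le_lintegral _ _)) hlow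
    _ = _ := by ring

lemma HasGoodBallEstimate.mul_withDensity_lt_le [Nontrivial E] (h : HasGoodBallEstimate μ f g N A)
    (hN : 1 ≤ N) (M : ℝ≥0) (hf : Continuous f) (hg : Measurable g)
    (hfin : ∫⁻ y, ↑(f y + M * g y) ∂μ ≠ ⊤) {t : ℝ≥0} (ht : 0 < t) :
    M * μ.withDensity (fun x => f x) {x | N * t < f x} ≤ 2 * 7 ^ Module.finrank ℝ E * A *
      μ.withDensity (fun x => ↑(f x + M * g x)) {x | t < 2 * (f x + M * g x)} := by
  set ψ : E → ℝ≥0 := fun y => f y + M * g y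
  have hψ : Measurable ψ := by fun_prop
  have hlevel_f : MeasurableSet {x | N * t < f x} := measurableSet_lt (by fun_prop) (by fun_prop)
  have hlevel_ψ : MeasurableSet {x | t < 2 * ψ x} := measurableSet_lt (by fun_prop) (by fun_prop)
  obtain ⟨R, hR, hlarge⟩ := exists_forall_lt_mul_measure_closedBall μ hfin
    (ENNReal.coe_ne_zero.2 ht.ne')
  have hvitali : ((M : ℝ≥0∞) • μ.withDensity (fun x => f x)) {x | N * t < f x} ≤
      ((2 * 7 ^ Module.finrank ℝ E * A : ℝ≥0∞) •
        (μ.withDensity (fun x => ψ x)).restrict {x | t < 2 * ψ x}) univ := by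
    refine measure_le_of_forall_closedBall_le (R := R) fun x hx => ?_
    have htx : (t : ℝ≥0∞) < f x := by
      exact_mod_cast (le_mul_of_one_le_left t.2 hN).trans_lt hx
    have hsmall : ∀ᶠ r in 𝓝[>] 0,
        t * μ (closedBall x r) ≤ ∫⁻ y in closedBall x r, ψ y ∂μ := by
      filter_upwards [eventually_mul_measure_closedBall_le μ
        (ENNReal.continuous_coe.comp hf).continuousAt htx] with r hr
      exact hr.trans (lintegral_mono fun y => by simp [ψ])
    obtain ⟨r, hr, hlow, hhigh⟩ := exists_mem_Ioc_le_and_lt_mul (K := 7) (by norm_num) hR hsmall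
      ((setLIntegral_le_lintegral _ _).trans_lt (hlarge x))
    refine ⟨r, hr, ?_⟩
    have hlevel : closedBall x r ∩ {y | (t : ℝ≥0∞) < 2 * ↑(ψ y)} =
        closedBall x r ∩ {y | t < 2 * ψ y} := by
      ext y
      simp [← ENNReal.coe_lt_coe]
    have hball := h.mul_setLIntegral_le M hr.1 hf hg hfin hlow hhigh.le
    rw [← withDensity_apply _ (measurableSet_closedBall.inter hlevel_f), hlevel,
      ← withDensity_apply _ (measurableSet_closedBall.inter hlevel_ψ)] at hball
    simpa [ψ, Measure.restrict_apply' hlevel_ψ] using hball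
  simpa [ψ] using hvitali

lemma HasGoodBallEstimate.mul_lintegral_rpow_le [Nontrivial E] (h : HasGoodBallEstimate μ f g N A)
    (hN : 1 ≤ N) (M : ℝ≥0) (hf : Continuous f) (hg : Measurable g)
    (hfin : ∫⁻ y, ↑(f y + M * g y) ∂μ ≠ ⊤) {s : ℝ} (hs : 0 < s) :
    M * ((N⁻¹ : ℝ≥0) ^ s * ∫⁻ x, (f x : ℝ≥0∞) ^ (s + 1) ∂μ) ≤
      (2 * 7 ^ Module.finrank ℝ E * A : ℝ≥0) *
        ((2 : ℝ≥0) ^ s * ∫⁻ x, ↑(f x + M * g x) ^ (s + 1) ∂μ) := by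
  rw [← lintegral_mul_rpow_withDensity hf.measurable _ hs.le,
    ← lintegral_mul_rpow_withDensity (by fun_prop) _ hs.le, ← smul_eq_mul, ← smul_eq_mul,
    ← lintegral_smul_measure, ← lintegral_smul_measure]
  refine lintegral_rpow_le_of_measure_lt_le (by fun_prop) (by fun_prop) (fun t ht => ?_) hs
  simpa [lt_inv_mul_iff₀ (one_pos.trans_le hN)] using h.mul_withDensity_lt_le hN M hf hg hfin ht

lemma HasGoodBallEstimate.lintegral_rpow_le [Nontrivial E] (h : HasGoodBallEstimate μ f g N A)
    (hN : 1 ≤ N) (hA : 0 < A) (hf : Continuous f) (hg : Measurable g)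
    (hfint : ∫⁻ x, f x ∂μ ≠ ⊤) (hgint : ∫⁻ x, g x ∂μ ≠ ⊤) {s : ℝ} (hs : 0 < s)
    (hfs : ∫⁻ x, (f x : ℝ≥0∞) ^ (s + 1) ∂μ ≠ ⊤) :
    ∫⁻ x, (f x : ℝ≥0∞) ^ (s + 1) ∂μ ≤
      ((4 * 7 ^ Module.finrank ℝ E * A * (4 * N) ^ s : ℝ≥0) : ℝ≥0∞) ^ (s + 1) *
        ∫⁻ x, (g x : ℝ≥0∞) ^ (s + 1) ∂μ := by
  set M : ℝ≥0 := 4 * 7 ^ Module.finrank ℝ E * A * (4 * N) ^ s with hM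
  set X := ∫⁻ x, (f x : ℝ≥0∞) ^ (s + 1) ∂μ
  set Y := ∫⁻ x, (g x : ℝ≥0∞) ^ (s + 1) ∂μ
  have hfin : ∫⁻ y, ↑(f y + M * g y) ∂μ ≠ ⊤ := by
    simp only [ENNReal.coe_add, ENNReal.coe_mul]
    rw [lintegral_add_left (by fun_prop), lintegral_const_mul _ (by fun_prop)]
    finiteness
  set c : ℝ≥0 := 2 * 7 ^ Module.finrank ℝ E * A * 4 ^ s with hc
  -- `M` is chosen for this factor `2`, which lets one of two copies of `c * X` be absorbed.
  have hMc : M * N⁻¹ ^ s = 2 * c := by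
    have : 0 < N := one_pos.trans_le hN
    rw [hM, hc, NNReal.mul_rpow, NNReal.inv_rpow]
    field_simp
    norm_num
  have habsorb : c * (X + X) ≤ c * (X + M ^ (s + 1) * Y) := calc
    c * (X + X) = M * ((N⁻¹ : ℝ≥0) ^ s * X) := by
      rw [← ENNReal.coe_rpow_of_nonneg _ hs.le, ← mul_assoc, ← ENNReal.coe_mul, hMc]
      push_cast
      ring
    _ ≤ _ := h.mul_lintegral_rpow_le hN M hf hg hfin hs
    _ ≤ (2 * 7 ^ Module.finrank ℝ E * A : ℝ≥0) *
        ((2 : ℝ≥0) ^ s * (2 ^ s * (X + M ^ (s + 1) * Y))) := by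
      gcongr
      exact lintegral_add_mul_rpow_le hf.measurable hg M hs.le
    _ = c * (X + M ^ (s + 1) * Y) := by
      rw [hc, show (4 : ℝ≥0) = 2 * 2 by norm_num, NNReal.mul_rpow]
      push_cast [ENNReal.coe_rpow_of_nonneg _ hs.le]
      ring
  exact ENNReal.le_of_add_le_add_left hfs
    ((ENNReal.mul_le_mul_iff_right (ENNReal.coe_ne_zero.2 (by positivity)) ENNReal.coe_ne_top).1
      habsorb)

end GoodLambda

section WirtingerBound

lemma lintegral_enorm_wirtingerBar_sub_mollify_sq_le (H : 𝓢(ℂ, ℂ)) (x : ℂ) {r : ℝ} (hr : 0 < r) :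
    ∫⁻ y in closedBall x (5 * r), ‖wirtingerBar H y - mollify r (wirtingerBar H) y‖ₑ ^ 2 ≤
      4 * ∫⁻ y in closedBall x (7 * r), ‖wirtinger H y‖ₑ ^ 2 := by
  have hsq (φ : ℂ → ℂ) (ν : Measure ℂ) : ∫⁻ y, ‖φ y‖ₑ ^ 2 ∂ν = eLpNorm φ 2 ν ^ 2 := by
    simpa using (eLpNorm_nnreal_pow_eq_lintegral (f := φ) (μ := ν) (two_ne_zero (α := ℝ≥0))).symm
  have hlocal := eLpNorm_wirtingerBar_sub_mollify_le H x hr (R := 5 * r) (S := 7 * r)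
    (by positivity) (by linarith)
  calc ∫⁻ y in closedBall x (5 * r), ‖wirtingerBar H y - mollify r (wirtingerBar H) y‖ₑ ^ 2
      = eLpNorm (wirtingerBar H - mollify r (wirtingerBar H)) 2
          (volume.restrict (closedBall x (5 * r))) ^ 2 := hsq _ _
    _ ≤ (2 * eLpNorm (wirtinger H) 2 (volume.restrict (closedBall x (7 * r)))) ^ 2 := by gcongr
    _ = 4 * ∫⁻ y in closedBall x (7 * r), ‖wirtinger H y‖ₑ ^ 2 := by
      rw [mul_pow, hsq]
      norm_num

lemma exists_four_mul_enorm_mollify_sq_le : ∃ N : ℝ≥0, 1 ≤ N ∧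
    ∀ (f : ℂ → ℂ) (x : ℂ) (r : ℝ) (t : ℝ≥0∞), Continuous f → 0 < r →
      ∫⁻ y in closedBall x (7 * r), ‖f y‖ₑ ^ 2 ≤ t * volume (closedBall x (7 * r)) →
      ∀ y ∈ closedBall x (5 * r), 4 * ‖mollify r f y‖ₑ ^ 2 ≤ N * t := by
  obtain ⟨B, hB⟩ := exists_enorm_mollify_sq_le
  refine ⟨max 1 (4 * B * (49 * NNReal.pi)), le_max_left _ _, fun f x r t hf hr hball y hy => ?_⟩
  have hr2 : ENNReal.ofReal (r ^ 2) ≠ 0 := by simpa using hr.ne'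
  calc 4 * ‖mollify r f y‖ₑ ^ 2
      ≤ 4 * (B / .ofReal (r ^ 2) * ∫⁻ z in closedBall y r, ‖f z‖ₑ ^ 2) := by
        gcongr
        exact hB f r y hf hr
    _ ≤ 4 * (B / .ofReal (r ^ 2) * (t * volume (closedBall x (7 * r)))) := by
        gcongr
        exact (lintegral_mono_set (closedBall_subset_closedBall'
          (by linarith [mem_closedBall.1 hy]))).trans hball
    _ = 4 * B * (49 * NNReal.pi) * t * (.ofReal (r ^ 2) / .ofReal (r ^ 2)) := by
        rw [Complex.volume_closedBall, ← ENNReal.ofReal_pow (by positivity), mul_pow,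
          ENNReal.ofReal_mul (by norm_num), div_eq_mul_inv, div_eq_mul_inv]
        norm_num
        ring
    _ = ↑(4 * B * (49 * NNReal.pi)) * t := by
        rw [ENNReal.div_self hr2 ENNReal.ofReal_ne_top, mul_one]
        push_cast
        rfl
    _ ≤ _ := by
        gcongr
        exact le_max_right _ _

lemma enorm_sq_le_four_mul_enorm_sub_sq {F : Type*} [SeminormedAddCommGroup F] {v w : F}
    (h : 4 * ‖w‖ₑ ^ 2 ≤ ‖v‖ₑ ^ 2) : ‖v‖ₑ ^ 2 ≤ 4 * ‖v - w‖ₑ ^ 2 := by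
  simp only [enorm_eq_nnnorm] at h ⊢
  norm_cast at h ⊢
  rw [← NNReal.coe_le_coe] at h ⊢
  push_cast at h ⊢
  have hhalf : 2 * ‖w‖ ≤ ‖v‖ := le_of_sq_le_sq (by linarith) (norm_nonneg v)
  nlinarith [norm_sub_norm_le v w, norm_nonneg v]

lemma exists_hasGoodBallEstimate_wirtingerBar : ∃ N : ℝ≥0, 1 ≤ N ∧ ∀ H : 𝓢(ℂ, ℂ),
    HasGoodBallEstimate volume (fun z => ‖wirtingerBar H z‖₊ ^ 2)
      (fun z => ‖wirtinger H z‖₊ ^ 2) N 16 := by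
  obtain ⟨N, hN, hmollify⟩ := exists_four_mul_enorm_mollify_sq_le
  refine ⟨N, hN, fun H x r t hr hball => ?_⟩
  have hb := continuous_wirtingerBar (H.smooth 1)
  simp only [ENNReal.coe_pow, ← enorm_eq_nnnorm] at hball ⊢
  have hpoint : ∀ y ∈ closedBall x (5 * r) ∩ {y | N * t < ‖wirtingerBar H y‖₊ ^ 2},
      ‖wirtingerBar H y‖ₑ ^ 2 ≤
        4 * ‖wirtingerBar H y - mollify r (wirtingerBar H) y‖ₑ ^ 2 := by
    rintro y ⟨hy, hlevel⟩
    have hlarge : (N * t : ℝ≥0∞) ≤ ‖wirtingerBar H y‖ₑ ^ 2 := by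
      simpa [enorm_eq_nnnorm] using ENNReal.coe_le_coe.2 (le_of_lt hlevel)
    exact enorm_sq_le_four_mul_enorm_sub_sq ((hmollify _ x r t hb hr hball y hy).trans hlarge)
  calc ∫⁻ y in closedBall x (5 * r) ∩ {y | N * t < ‖wirtingerBar H y‖₊ ^ 2}, ‖wirtingerBar H y‖ₑ ^ 2
      ≤ ∫⁻ y in closedBall x (5 * r) ∩ {y | N * t < ‖wirtingerBar H y‖₊ ^ 2},
          4 * ‖wirtingerBar H y - mollify r (wirtingerBar H) y‖ₑ ^ 2 :=
        setLIntegral_mono' (measurableSet_closedBall.inter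
          (measurableSet_lt measurable_const (hb.nnnorm.pow 2).measurable)) hpoint
    _ ≤ ∫⁻ y in closedBall x (5 * r),
          4 * ‖wirtingerBar H y - mollify r (wirtingerBar H) y‖ₑ ^ 2 :=
        lintegral_mono_set inter_subset_left
    _ ≤ 4 * (4 * ∫⁻ y in closedBall x (7 * r), ‖wirtinger H y‖ₑ ^ 2) := by
        rw [lintegral_const_mul' _ _ (by norm_num)]
        gcongr
        exact lintegral_enorm_wirtingerBar_sub_mollify_sq_le H x hr
    _ = _ := by
        rw [← mul_assoc]
        norm_num

lemma exists_eLpNorm_wirtingerBar_le {p : ℝ≥0} (hp : 2 ≤ p) : ∃ C : ℝ≥0, ∀ H : 𝓢(ℂ, ℂ),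
    eLpNorm (wirtingerBar H) p ≤ C * eLpNorm (wirtinger H) p := by
  obtain rfl | hp2 := hp.eq_or_lt
  · exact ⟨1, fun H => by simpa using (eLpNorm_wirtingerBar_two H).le⟩
  obtain ⟨N, hN, hgood⟩ := exists_hasGoodBallEstimate_wirtingerBar
  have hp0 : p ≠ 0 := (two_pos.trans hp2).ne'
  have : (2 : ℝ) < p := mod_cast hp2
  set s : ℝ := p / 2 - 1
  have hs : 2 * (s + 1) = p := by ring
  set M : ℝ≥0 := 4 * 7 ^ Module.finrank ℝ ℂ * 16 * (4 * N) ^ s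
  refine ⟨NNReal.sqrt M, fun H => ?_⟩
  have hpow (φ : ℂ → ℂ) : ∫⁻ x, (↑(‖φ x‖₊ ^ 2) : ℝ≥0∞) ^ (s + 1) = eLpNorm φ p ^ (p : ℝ) := by
    rw [eLpNorm_nnreal_pow_eq_lintegral hp0, ← hs]
    simp [ENNReal.rpow_mul, enorm_eq_nnnorm]
  have hint {φ : ℂ → ℂ} (hφ : MemLp φ 2) : ∫⁻ x, (↑(‖φ x‖₊ ^ 2) : ℝ≥0∞) ≠ ⊤ := by
    simpa [enorm_eq_nnnorm] using
      (eLpNorm_lt_top_iff_lintegral_rpow_enorm_lt_top two_ne_zero (by simp)).1 hφ.2 |>.ne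
  have hle := (hgood H).lintegral_rpow_le hN (by norm_num)
    ((continuous_wirtingerBar (H.smooth 1)).nnnorm.pow 2)
    ((continuous_wirtinger (H.smooth 1)).nnnorm.pow 2).measurable
    (hint (memLp_wirtingerBar H 2)) (hint (memLp_wirtinger H 2)) (s := s) (by linarith)
    (hpow _ ▸ ENNReal.rpow_ne_top_of_nonneg p.coe_nonneg (memLp_wirtingerBar H p).eLpNorm_ne_top)
  have hM : (M : ℝ≥0∞) ^ (s + 1) = (NNReal.sqrt M : ℝ≥0∞) ^ (p : ℝ) := by
    rw [← hs, ENNReal.rpow_mul, ENNReal.rpow_ofNat, ← ENNReal.coe_pow, NNReal.sq_sqrt]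
  rwa [hpow, hpow, hM, ← ENNReal.mul_rpow_of_nonneg _ _ p.coe_nonneg,
    ENNReal.rpow_le_rpow_iff (by linarith)] at hle

lemma eLpNorm_norm_add_norm_le {α E F : Type*} [MeasurableSpace α] [NormedAddCommGroup E]
    [NormedAddCommGroup F] {ν : Measure α} {f : α → E} {g : α → F} {p : ℝ≥0∞}
    (hf : AEStronglyMeasurable f ν) (hg : AEStronglyMeasurable g ν) (hp : 1 ≤ p) :
    eLpNorm (fun x => ‖f x‖ + ‖g x‖) p ν ≤ eLpNorm f p ν + eLpNorm g p ν := by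
  rw [← eLpNorm_norm f, ← eLpNorm_norm g]
  exact eLpNorm_add_le hf.norm hg.norm hp

lemma exists_eLpNorm_wirtinger_add_wirtingerBar_le {p : ℝ≥0} (hp : 2 ≤ p) :
    ∃ C : ℝ≥0, 0 < C ∧ ∀ H : 𝓢(ℂ, ℂ),
      eLpNorm (fun z => ‖wirtinger H z‖ + ‖wirtingerBar H z‖) p ≤
        C * eLpNorm (wirtinger H) p := by
  obtain ⟨C, hC⟩ := exists_eLpNorm_wirtingerBar_le hp
  refine ⟨1 + C, by positivity, fun H => ?_⟩
  have hp1 : (1 : ℝ≥0∞) ≤ p := mod_cast one_le_two.trans hp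
  refine (eLpNorm_norm_add_norm_le (memLp_wirtinger H p).1 (memLp_wirtingerBar H p).1 hp1).trans ?_
  rw [ENNReal.coe_add, ENNReal.coe_one, add_mul, one_mul]
  gcongr
  exact hC H

end WirtingerBound

section Helmholtz

/-- The planar vector field `∇g + ∇⊥w = (∂₁g + ∂₂w, ∂₂g - ∂₁w)` with scalar potential `g` and
stream function `w`. -/
def helmholtzField (g w : E2 → ℝ) (x : E2) : E2 :=
  !₂[fderiv ℝ g x (e2 0) + fderiv ℝ w x (e2 1), fderiv ℝ g x (e2 1) - fderiv ℝ w x (e2 0)]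

/-- The isometry `(x, y) ↦ x + iy` of the Euclidean plane onto `ℂ`. -/
def planeEquivComplex : E2 ≃ₗᵢ[ℝ] ℂ := orthonormalBasisOneI.repr.symm

lemma planeEquivComplex_e2_zero : planeEquivComplex (e2 0) = 1 := by
  simp [planeEquivComplex, e2]

lemma planeEquivComplex_e2_one : planeEquivComplex (e2 1) = I := by
  simp [planeEquivComplex, e2]

/-- The complex potential `g + iw` of `∇g + ∇⊥w`, as a Schwartz function on `ℂ`. -/
def complexPotential (g w : 𝓢(E2, ℝ)) : 𝓢(ℂ, ℂ) :=
  SchwartzMap.compCLMOfContinuousLinearEquiv ℝ planeEquivComplex.symm.toContinuousLinearEquiv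
    (g.postcompCLM ofRealCLM + I • w.postcompCLM ofRealCLM)

variable (g w : 𝓢(E2, ℝ))

lemma complexPotential_planeEquivComplex (x : E2) :
    complexPotential g w (planeEquivComplex x) = g x + I * w x := by
  simp [complexPotential]

lemma fderiv_complexPotential (x : E2) :
    fderiv ℝ (complexPotential g w) (planeEquivComplex x) ∘L
        (planeEquivComplex.toContinuousLinearEquiv : E2 →L[ℝ] ℂ) =
      ofRealCLM ∘L fderiv ℝ g x + I • ofRealCLM ∘L fderiv ℝ w x := by
  have hcomp : complexPotential g w ∘ planeEquivComplex.toContinuousLinearEquiv =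
      fun x => ofRealCLM (g x) + I • ofRealCLM (w x) :=
    funext (complexPotential_planeEquivComplex g w)
  have hg := ofRealCLM.hasFDerivAt.comp x g.differentiableAt.hasFDerivAt
  have hw := ofRealCLM.hasFDerivAt.comp x w.differentiableAt.hasFDerivAt
  exact (planeEquivComplex.toContinuousLinearEquiv.comp_right_fderiv).symm.trans
    (hcomp ▸ (hg.add (hw.const_smul I)).fderiv)

lemma norm_fderiv_le_complexPotential_left (x : E2) :
    ‖fderiv ℝ g x‖ ≤ ‖fderiv ℝ (complexPotential g w) (planeEquivComplex x)‖ := by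
  refine ContinuousLinearMap.opNorm_le_bound _ (norm_nonneg _) fun v => ?_
  have hv := DFunLike.congr_fun (fderiv_complexPotential g w x) v
  rw [← planeEquivComplex.norm_map v]
  refine le_trans ?_ (ContinuousLinearMap.le_opNorm _ _)
  refine le_trans (le_of_eq ?_) (abs_re_le_norm _)
  simpa using congrArg (fun z => |re z|) hv.symm

lemma norm_fderiv_le_complexPotential_right (x : E2) :
    ‖fderiv ℝ w x‖ ≤ ‖fderiv ℝ (complexPotential g w) (planeEquivComplex x)‖ := by
  refine ContinuousLinearMap.opNorm_le_bound _ (norm_nonneg _) fun v => ?_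
  have hv := DFunLike.congr_fun (fderiv_complexPotential g w x) v
  rw [← planeEquivComplex.norm_map v]
  refine le_trans ?_ (ContinuousLinearMap.le_opNorm _ _)
  refine le_trans (le_of_eq ?_) (abs_im_le_norm _)
  simpa using congrArg (fun z => |im z|) hv.symm

lemma two_mul_norm_wirtinger_complexPotential (x : E2) :
    2 * ‖wirtinger (complexPotential g w) (planeEquivComplex x)‖ = ‖helmholtzField g w x‖ := by
  have hderiv (v : E2) : fderiv ℝ (complexPotential g w) (planeEquivComplex x)
      (planeEquivComplex v) = fderiv ℝ g x v + I * fderiv ℝ w x v :=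
    DFunLike.congr_fun (fderiv_complexPotential g w x) v
  have hconj : 2 * wirtinger (complexPotential g w) (planeEquivComplex x) =
      conj (planeEquivComplex (helmholtzField g w x)) := by
    rw [wirtinger, ← planeEquivComplex_e2_zero, ← planeEquivComplex_e2_one, hderiv, hderiv,
      planeEquivComplex_e2_one, planeEquivComplex, orthonormalBasisOneI_repr_symm_apply]
    simp only [helmholtzField, Fin.isValue, Matrix.cons_val_zero, ofReal_add, Matrix.cons_val_one,
      Matrix.cons_val_fin_one, ofReal_sub, map_add, conj_ofReal, map_mul, map_sub, conj_I, mul_neg]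
    linear_combination -fderiv ℝ w x (e2 1) * I_sq
  rw [← planeEquivComplex.norm_map, ← norm_conj (planeEquivComplex _), ← hconj, norm_mul,
    Complex.norm_ofNat]

lemma eLpNorm_wirtinger_complexPotential_le (p : ℝ≥0∞) :
    eLpNorm (wirtinger (complexPotential g w)) p ≤ eLpNorm (helmholtzField g w) p := by
  rw [← eLpNorm_comp_measurePreserving (memLp_wirtinger (complexPotential g w) p).1
    planeEquivComplex.measurePreserving]
  refine eLpNorm_mono fun x => ?_
  rw [← two_mul_norm_wirtinger_complexPotential]
  exact le_mul_of_one_le_left (norm_nonneg _) one_le_two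

lemma memLp_helmholtzField (p : ℝ≥0∞) : MemLp (helmholtzField g w) p := by
  have hH := (memLp_wirtinger (complexPotential g w) p).comp_measurePreserving
    planeEquivComplex.measurePreserving
  refine (hH.const_mul 2).congr_norm (Continuous.aestronglyMeasurable ?_) (.of_forall fun x => ?_)
  · have hg := continuous_fderiv_schwartz g
    have hw := continuous_fderiv_schwartz w
    exact (PiLp.continuous_toLp 2 _).comp (by fun_prop)
  · simp [two_mul_norm_wirtinger_complexPotential]

lemma eLpNorm_le_of_norm_le_fderiv_comp {F : Type*} [NormedAddCommGroup F] {f : E2 → F}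
    {H : 𝓢(ℂ, ℂ)} (hf : ∀ x, ‖f x‖ ≤ ‖fderiv ℝ H (planeEquivComplex x)‖) (p : ℝ≥0∞) :
    eLpNorm f p ≤ eLpNorm (fun z => ‖wirtinger H z‖ + ‖wirtingerBar H z‖) p := by
  have hmeas : AEStronglyMeasurable fun z => ‖wirtinger H z‖ + ‖wirtingerBar H z‖ :=
    (memLp_wirtinger H p).norm.1.add (memLp_wirtingerBar H p).norm.1
  rw [← eLpNorm_comp_measurePreserving hmeas planeEquivComplex.measurePreserving]
  exact eLpNorm_mono_real fun x => (hf x).trans (norm_fderiv_le_wirtinger H _)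

lemma exists_lpNorm_fderiv_le_helmholtzField {p : ℝ≥0} (hp : 2 ≤ p) :
    ∃ C : ℝ, 0 < C ∧ ∀ g w : 𝓢(E2, ℝ),
      lpNorm (fderiv ℝ g) p volume ≤ C * lpNorm (helmholtzField g w) p volume ∧
      lpNorm (fderiv ℝ w) p volume ≤ C * lpNorm (helmholtzField g w) p volume := by
  obtain ⟨C, hC0, hC⟩ := exists_eLpNorm_wirtinger_add_wirtingerBar_le hp
  refine ⟨C, hC0, fun g w => ?_⟩
  have hF := memLp_helmholtzField g w p
  have hbound (f : 𝓢(E2, ℝ)) (hf : ∀ x, ‖fderiv ℝ f x‖ ≤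
      ‖fderiv ℝ (complexPotential g w) (planeEquivComplex x)‖) :
      lpNorm (fderiv ℝ f) p volume ≤ C * lpNorm (helmholtzField g w) p volume := by
    have hle : eLpNorm (fderiv ℝ f) p ≤ C * eLpNorm (helmholtzField g w) p :=
      (eLpNorm_le_of_norm_le_fderiv_comp hf p).trans <| (hC _).trans <|
        mul_right_mono (eLpNorm_wirtinger_complexPotential_le g w p)
    rw [← toReal_eLpNorm (continuous_fderiv_schwartz f).aestronglyMeasurable,
      ← toReal_eLpNorm hF.1, ← ENNReal.coe_toReal, ← ENNReal.toReal_mul]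
    exact ENNReal.toReal_mono (ENNReal.mul_ne_top ENNReal.coe_ne_top hF.eLpNorm_ne_top) hle
  exact ⟨hbound g (norm_fderiv_le_complexPotential_left g w),
    hbound w (norm_fderiv_le_complexPotential_right g w)⟩

end Helmholtz

section EffectiveFlux

/-- The `i`-th component of a Schwartz vector field on the plane, as a Schwartz function. -/
def schwartzComponent (u : 𝓢(E2, E2)) (i : Fin 2) : 𝓢(E2, ℝ) :=
  u.postcompCLM (EuclideanSpace.proj i : E2 →L[ℝ] ℝ)

/-- The divergence `div2 u`, as a Schwartz function. -/
def schwartzDiv (u : 𝓢(E2, E2)) : 𝓢(E2, ℝ) :=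
  ∂_{e2 0} (schwartzComponent u 0) + ∂_{e2 1} (schwartzComponent u 1)

/-- The vorticity `curl2 u`, as a Schwartz function. -/
def schwartzCurl (u : 𝓢(E2, E2)) : 𝓢(E2, ℝ) :=
  ∂_{e2 1} (schwartzComponent u 0) - ∂_{e2 0} (schwartzComponent u 1)

/-- The effective viscous flux `G = (2μ + λ) div u - P`, as a Schwartz function. -/
def effectiveFlux (μ lam : ℝ) (u : 𝓢(E2, E2)) (P : 𝓢(E2, ℝ)) : 𝓢(E2, ℝ) :=
  (2 * μ + lam) • schwartzDiv u - P

variable (u : 𝓢(E2, E2))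

lemma coe_lineDerivOp_schwartzComponent (i : Fin 2) (v : E2) :
    ⇑(∂_{v} (schwartzComponent u i) : 𝓢(E2, ℝ)) = fun x => fderiv ℝ u x v i := by
  ext x
  rw [SchwartzMap.lineDerivOp_apply_eq_fderiv]
  exact DFunLike.congr_fun ((EuclideanSpace.proj i : E2 →L[ℝ] ℝ).hasFDerivAt.comp x
    u.differentiableAt.hasFDerivAt).fderiv v

lemma coe_schwartzDiv : ⇑(schwartzDiv u) = div2 u := by
  ext x
  simp [schwartzDiv, div2, coe_lineDerivOp_schwartzComponent, Fin.sum_univ_two]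

lemma coe_schwartzCurl : ⇑(schwartzCurl u) = curl2 u := by
  ext x
  simp [schwartzCurl, curl2, coe_lineDerivOp_schwartzComponent]

lemma coe_effectiveFlux (μ lam : ℝ) (P : 𝓢(E2, ℝ)) :
    ⇑(effectiveFlux μ lam u P) = fun y => (2 * μ + lam) * div2 u y - P y := by
  ext y
  simp [effectiveFlux, coe_schwartzDiv]

lemma lapVec_eq_lineDerivOp (x : E2) (i : Fin 2) :
    lapVec u x i = (∂_{e2 0} (∂_{e2 0} (schwartzComponent u i)) : 𝓢(E2, ℝ)) x +
      (∂_{e2 1} (∂_{e2 1} (schwartzComponent u i)) : 𝓢(E2, ℝ)) x := by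
  simp only [lapVec, Fin.sum_univ_two, ← coe_lineDerivOp_schwartzComponent,
    SchwartzMap.lineDerivOp_apply_eq_fderiv]

lemma NSflux_eq_helmholtzField (μ lam : ℝ) (P : 𝓢(E2, ℝ)) :
    NSflux μ lam u P =
      helmholtzField (effectiveFlux μ lam u P) (μ • schwartzCurl u : 𝓢(E2, ℝ)) := by
  ext x i
  have hi : NSflux μ lam u P x i = μ * lapVec u x i +
      (μ + lam) * fderiv ℝ (div2 u) x (e2 i) - fderiv ℝ P x (e2 i) := rfl
  rw [hi, helmholtzField, lapVec_eq_lineDerivOp, ← coe_schwartzDiv]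
  simp only [← SchwartzMap.lineDerivOp_apply_eq_fderiv, effectiveFlux, schwartzDiv, schwartzCurl,
    sub_eq_add_neg, LineDeriv.lineDerivOp_add, LineDeriv.lineDerivOp_neg,
    LineDeriv.lineDerivOp_smul, add_apply, neg_apply, smul_apply, smul_eq_mul]
  fin_cases i <;> simp [lineDerivOp_comm _ (e2 1) (e2 0)] <;> ring

lemma lpNorm_eq_integral_rpow {E F : Type*} [MeasurableSpace E] [NormedAddCommGroup F]
    {ν : Measure E} {f : E → F} (hf : AEStronglyMeasurable f ν) {p : ℝ≥0} (hp : p ≠ 0) :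
    lpNorm f p ν = (∫ x, ‖f x‖ ^ (p : ℝ) ∂ν) ^ (1 / (p : ℝ)) := by
  rw [lpNorm_eq_integral_norm_rpow_toReal (by simpa) ENNReal.coe_ne_top hf, one_div,
    ENNReal.coe_toReal]

theorem effective_flux_gradient_estimate_general {μ : ℝ} (hμ : μ ≠ 0) {p : ℝ} (hp : 2 ≤ p) :
    ∃ C : ℝ, 0 < C ∧ ∀ (lam : ℝ) (u : 𝓢(E2, E2)) (P : 𝓢(E2, ℝ)),
      (∫ x : E2, ‖fderiv ℝ (fun y => (2 * μ + lam) * div2 u y - P y) x‖ ^ p) ^ (1 / p) +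
      (∫ x : E2, ‖fderiv ℝ (curl2 u) x‖ ^ p) ^ (1 / p) ≤
        C * (∫ x : E2, ‖NSflux μ lam u P x‖ ^ p) ^ (1 / p) := by
  lift p to ℝ≥0 using by linarith
  obtain ⟨C, hC0, hC⟩ := exists_lpNorm_fderiv_le_helmholtzField (mod_cast hp : 2 ≤ p)
  have hp0 : p ≠ 0 := fun h => by norm_num [h] at hp
  refine ⟨C + |μ|⁻¹ * C, by positivity, fun lam u P => ?_⟩
  obtain ⟨hG, hW⟩ := hC (effectiveFlux μ lam u P) (μ • schwartzCurl u)
  have hcurl : lpNorm (fderiv ℝ (μ • schwartzCurl u)) p volume =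
      |μ| * lpNorm (fderiv ℝ (schwartzCurl u)) p volume := by
    rw [show ⇑(μ • schwartzCurl u) = μ • ⇑(schwartzCurl u) from rfl, fderiv_const_smul_field,
      lpNorm_const_smul, coe_nnnorm, Real.norm_eq_abs]
  rw [hcurl, ← le_inv_mul_iff₀ (abs_pos.2 hμ), ← mul_assoc] at hW
  rw [← coe_effectiveFlux, ← coe_schwartzCurl, NSflux_eq_helmholtzField,
    ← lpNorm_eq_integral_rpow (continuous_fderiv_schwartz _).aestronglyMeasurable hp0,
    ← lpNorm_eq_integral_rpow (continuous_fderiv_schwartz _).aestronglyMeasurable hp0,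
    ← lpNorm_eq_integral_rpow (memLp_helmholtzField _ _ p).1 hp0, add_mul]
  exact add_le_add hG hW

end EffectiveFlux

/-- Estimate (h19) of Lemma 2.6: ‖∇G‖_{L^p} + ‖∇curl u‖_{L^p} ≤ C ‖F‖_{L^p}, where
G = (2μ+λ) div u − P is the effective viscous flux and F = μΔu + (μ+λ)∇(div u) − ∇P. -/
theorem effective_flux_gradient_estimate (μ lam : ℝ) (hμ : 0 < μ) (hlam : 0 ≤ μ + lam)
    (p : ℝ) (hp : 2 ≤ p) :
    ∃ C : ℝ, 0 < C ∧ ∀ (u : SchwartzMap E2 E2) (P : SchwartzMap E2 ℝ),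
      (∫ x : E2, ‖fderiv ℝ (fun y => (2 * μ + lam) * div2 (⇑u) y - P y) x‖ ^ p) ^ (1 / p) +
      (∫ x : E2, ‖fderiv ℝ (curl2 (⇑u)) x‖ ^ p) ^ (1 / p) ≤
        C * (∫ x : E2, ‖NSflux μ lam (⇑u) (⇑P) x‖ ^ p) ^ (1 / p) :=
  (effective_flux_gradient_estimate_general hμ.ne' hp).imp fun _ hC => ⟨hC.1, hC.2 lam⟩
end
end
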